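/- arXiv:2208.08916 — 2 statements merged into one kernel-verified Lean document; each statement's English description precedes it below -/
import Mathlib

section
/- Let M₁, M₂, M₃ ∈ Matrix (Fin 3) (Fin 3) ℝ be symmetric matrices with associated quadratic forms Qᵢ(v) = vᵀMᵢv, and suppose that the binary sextic form p(t₀, t₁) := det(t₀²M₁ + 2t₀t₁M₂ + t₁²M₃) is nonzero and squarefree as a homogeneous polynomial in ℂ[t₀, t₁] (equivalently, the genus 2 curve Γ : y² = −p is smooth). Let ℝP¹ be the quotient topological space of ℝ²∖{0} by the scaling action of ℝ∖{0}, and let S₁ := { [t₀ : t₁] ∈ ℝP¹ : ∃ v ∈ ℝ³∖{0}, t₀²Q₁(v) + 2t₀t₁Q₂(v) + t₁²Q₃(v) ≥ 0 } (the image in ℝP¹ of the real points of the quadric surface bundle π₁ : Y → ℙ¹; note this condition is invariant under scaling of (t₀,t₁)). Then S₁ has at most three connected components. (Consequently Y(ℝ) has at most three connected components.) -/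
/-- The scaling relation on nonzero vectors of `ℝⁿ`. -/
def projRel (n : ℕ) (v w : {x : Fin n → ℝ // x ≠ 0}) : Prop :=
  ∃ c : ℝ, c ≠ 0 ∧ c • (v : Fin n → ℝ) = (w : Fin n → ℝ)

/-- The real projective space `ℝPⁿ⁻¹`, as the quotient topological space of `ℝⁿ ∖ {0}` by the
scaling action of `ℝ ∖ {0}`. -/
def RP (n : ℕ) : Type := Quot (projRel n)

instance (n : ℕ) : TopologicalSpace (RP n) :=
  inferInstanceAs (TopologicalSpace (Quot (projRel n)))

open MvPolynomial in
/-- The binary sextic form `det(t₀²M₁ + 2t₀t₁M₂ + t₁²M₃)`, as a polynomial in `ℂ[t₀, t₁]`. -/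
noncomputable def binarySextic (M₁ M₂ M₃ : Matrix (Fin 3) (Fin 3) ℝ) :
    MvPolynomial (Fin 2) ℂ :=
  Matrix.det (Matrix.of fun i j =>
    X 0 ^ 2 * C (M₁ i j : ℂ) + 2 * X 0 * X 1 * C (M₂ i j : ℂ) + X 1 ^ 2 * C (M₃ i j : ℂ))

namespace QB

open Matrix

/-- The symmetric matrix `s²M₁ + 2swM₂ + w²M₃`. -/
def AA {K : Type*} [CommRing K] (M₁ M₂ M₃ : Matrix (Fin 3) (Fin 3) K) (s w : K) :
    Matrix (Fin 3) (Fin 3) K :=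
  Matrix.of fun i j => s ^ 2 * M₁ i j + 2 * s * w * M₂ i j + w ^ 2 * M₃ i j

/-- The polarization of `AA`. -/
def BB {K : Type*} [CommRing K] (M₁ M₂ M₃ : Matrix (Fin 3) (Fin 3) K) (a b c d : K) :
    Matrix (Fin 3) (Fin 3) K :=
  Matrix.of fun i j => a * c * M₁ i j + (a * d + b * c) * M₂ i j + b * d * M₃ i j

lemma AA_comb {K : Type*} [CommRing K] (M₁ M₂ M₃ : Matrix (Fin 3) (Fin 3) K) (a b c d x y : K) :
    AA M₁ M₂ M₃ (a * x + c * y) (b * x + d * y) =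
      AA (AA M₁ M₂ M₃ a b) (BB M₁ M₂ M₃ a b c d) (AA M₁ M₂ M₃ c d) x y := by
  ext i j
  simp only [AA, BB, Matrix.of_apply]
  ring

/-- Negative definiteness. -/
def ND (A : Matrix (Fin 3) (Fin 3) ℝ) : Prop := ∀ v : Fin 3 → ℝ, v ≠ 0 → v ⬝ᵥ (A *ᵥ v) < 0

section Algebra

variable {K : Type*} [CommRing K]

/-- First order term of a product. -/
def l1 (b c b' c' b'' c'' : K) : K := 2 * (b * c' * c'' + c * b' * c'' + c * c' * b'')

/-- Remainder of a product. -/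
def l2 (x y a b c a' b' c' a'' b'' c'' : K) : K :=
  y ^ 4 * (a * c' * c'' + c * a' * c'' + c * c' * a'') +
  y ^ 2 * ((2 * y * b + x * a) * (2 * y * b' + x * a') * c'' +
    (2 * y * b + x * a) * c' * (2 * y * b'' + x * a'') +
    c * (2 * y * b' + x * a') * (2 * y * b'' + x * a'')) +
  x * ((2 * y * b + x * a) * (2 * y * b' + x * a') * (2 * y * b'' + x * a''))

lemma prod3 (x y a b c a' b' c' a'' b'' c'' : K) :
    (x ^ 2 * a + 2 * x * y * b + y ^ 2 * c) * (x ^ 2 * a' + 2 * x * y * b' + y ^ 2 * c') *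
      (x ^ 2 * a'' + 2 * x * y * b'' + y ^ 2 * c'') =
    y ^ 6 * (c * c' * c'') + x * y ^ 5 * l1 b c b' c' b'' c'' +
      x ^ 2 * l2 x y a b c a' b' c' a'' b'' c'' := by
  unfold l1 l2
  ring

/-- Coefficient of `x y^5` in the determinant. -/
def c1 (B C : Matrix (Fin 3) (Fin 3) K) : K :=
  l1 (B 0 0) (C 0 0) (B 1 1) (C 1 1) (B 2 2) (C 2 2)
  - l1 (B 0 0) (C 0 0) (B 1 2) (C 1 2) (B 2 1) (C 2 1)
  - l1 (B 0 1) (C 0 1) (B 1 0) (C 1 0) (B 2 2) (C 2 2)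
  + l1 (B 0 1) (C 0 1) (B 1 2) (C 1 2) (B 2 0) (C 2 0)
  + l1 (B 0 2) (C 0 2) (B 1 0) (C 1 0) (B 2 1) (C 2 1)
  - l1 (B 0 2) (C 0 2) (B 1 1) (C 1 1) (B 2 0) (C 2 0)

/-- Remainder of the determinant. -/
def rr (A B C : Matrix (Fin 3) (Fin 3) K) (x y : K) : K :=
  l2 x y (A 0 0) (B 0 0) (C 0 0) (A 1 1) (B 1 1) (C 1 1) (A 2 2) (B 2 2) (C 2 2)
  - l2 x y (A 0 0) (B 0 0) (C 0 0) (A 1 2) (B 1 2) (C 1 2) (A 2 1) (B 2 1) (C 2 1)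
  - l2 x y (A 0 1) (B 0 1) (C 0 1) (A 1 0) (B 1 0) (C 1 0) (A 2 2) (B 2 2) (C 2 2)
  + l2 x y (A 0 1) (B 0 1) (C 0 1) (A 1 2) (B 1 2) (C 1 2) (A 2 0) (B 2 0) (C 2 0)
  + l2 x y (A 0 2) (B 0 2) (C 0 2) (A 1 0) (B 1 0) (C 1 0) (A 2 1) (B 2 1) (C 2 1)
  - l2 x y (A 0 2) (B 0 2) (C 0 2) (A 1 1) (B 1 1) (C 1 1) (A 2 0) (B 2 0) (C 2 0)

lemma det_expand (A B C : Matrix (Fin 3) (Fin 3) K) (x y : K) :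
    (AA A B C x y).det = y ^ 6 * C.det + x * y ^ 5 * c1 B C + x ^ 2 * rr A B C x y := by
  simp only [Matrix.det_fin_three, AA, Matrix.of_apply, prod3, c1, rr]
  ring

end Algebra

/-- A squarefree binary sextic has only simple real zeros. -/
lemma simple_zero (M₁ M₂ M₃ : Matrix (Fin 3) (Fin 3) ℝ) (hsf : Squarefree (binarySextic M₁ M₂ M₃))
    (a b c d : ℝ) (hD : a * d - b * c ≠ 0) (h0 : (AA M₁ M₂ M₃ c d).det = 0)
    (h1 : c1 (BB M₁ M₂ M₃ a b c d) (AA M₁ M₂ M₃ c d) = 0) : False := by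
  let φ : ℝ →+* MvPolynomial (Fin 2) ℂ := MvPolynomial.C.comp Complex.ofRealHom
  let D := a * d - b * c
  let x : MvPolynomial (Fin 2) ℂ :=
    φ D⁻¹ * (φ d * MvPolynomial.X 0 - φ c * MvPolynomial.X 1)
  let y : MvPolynomial (Fin 2) ℂ :=
    φ D⁻¹ * (φ a * MvPolynomial.X 1 - φ b * MvPolynomial.X 0)
  have hDD : φ D⁻¹ * (φ a * φ d - φ b * φ c) = 1 := by
    rw [← map_mul, ← map_mul, ← map_sub, ← map_mul, inv_mul_cancel₀ hD, map_one]
  have hx : φ a * x + φ c * y = MvPolynomial.X 0 := by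
    simp only [x, y]
    linear_combination (MvPolynomial.X 0) * hDD
  have hy : φ b * x + φ d * y = MvPolynomial.X 1 := by
    simp only [x, y]
    linear_combination (MvPolynomial.X 1) * hDD
  have hp : binarySextic M₁ M₂ M₃ =
      (AA (M₁.map φ) (M₂.map φ) (M₃.map φ) (MvPolynomial.X 0) (MvPolynomial.X 1)).det := by
    rfl
  have hmA : ∀ s w, AA (M₁.map φ) (M₂.map φ) (M₃.map φ) (φ s) (φ w) = (AA M₁ M₂ M₃ s w).map φ := by
    intro s w
    ext1 i j
    simp only [AA, Matrix.of_apply, Matrix.map_apply, map_add, map_mul, map_pow, map_ofNat]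
  have hmB : BB (M₁.map φ) (M₂.map φ) (M₃.map φ) (φ a) (φ b) (φ c) (φ d) =
      (BB M₁ M₂ M₃ a b c d).map φ := by
    ext1 i j
    simp only [BB, Matrix.of_apply, Matrix.map_apply, map_add, map_mul]
  have hmc : ∀ B C : Matrix (Fin 3) (Fin 3) ℝ, c1 (B.map φ) (C.map φ) = φ (c1 B C) := by
    intro B C
    simp only [c1, l1, Matrix.map_apply, map_add, map_mul, map_sub, map_ofNat]
  have hdet : ((AA M₁ M₂ M₃ c d).map φ).det = 0 := by
    have := RingHom.map_det φ (AA M₁ M₂ M₃ c d)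
    rw [h0, map_zero] at this
    exact this.symm
  rw [← hx, ← hy, AA_comb, det_expand, hmA c d, hmB, hmc, h1, hdet] at hp
  have hdvd : x * x ∣ binarySextic M₁ M₂ M₃ := by
    rw [hp, map_zero, mul_zero, mul_zero, zero_add, zero_add, pow_two]
    exact Dvd.intro _ rfl
  have hu := hsf x hdvd
  have hu2 := hu.map (MvPolynomial.eval ![(c : ℂ), (d : ℂ)])
  have : MvPolynomial.eval ![(c : ℂ), (d : ℂ)] x = 0 := by
    simp [x, φ]
    right
    ring
  rw [this] at hu2
  exact not_isUnit_zero hu2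

/-- maximum of the form over the unit sphere -/
noncomputable def mx (A : Matrix (Fin 3) (Fin 3) ℝ) : ℝ :=
  sSup ((fun v : Fin 3 → ℝ => v ⬝ᵥ (A *ᵥ v)) '' Metric.sphere 0 1)

lemma cont_form : Continuous (fun z : Matrix (Fin 3) (Fin 3) ℝ × (Fin 3 → ℝ) =>
    z.2 ⬝ᵥ (z.1 *ᵥ z.2)) := by
  fun_prop

lemma mx_cont : Continuous mx := by
  unfold mx
  exact IsCompact.continuous_sSup (f := fun (A : Matrix (Fin 3) (Fin 3) ℝ) (v : Fin 3 → ℝ) =>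
    v ⬝ᵥ (A *ᵥ v)) (isCompact_sphere 0 1) cont_form

lemma mx_spec (A : Matrix (Fin 3) (Fin 3) ℝ) :
    ∃ v : Fin 3 → ℝ, v ≠ 0 ∧ v ⬝ᵥ (A *ᵥ v) = mx A ∧
      ∀ w : Fin 3 → ℝ, w ⬝ᵥ (A *ᵥ w) ≤ ‖w‖ ^ 2 * mx A := by
  have hc : IsCompact (Metric.sphere (0 : Fin 3 → ℝ) 1) := isCompact_sphere 0 1
  have hcont : Continuous (fun v : Fin 3 → ℝ => v ⬝ᵥ (A *ᵥ v)) := by fun_prop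
  have hne : (Metric.sphere (0 : Fin 3 → ℝ) 1).Nonempty := NormedSpace.sphere_nonempty.2 zero_le_one
  obtain ⟨v, hv, hve, hmax⟩ := hc.exists_sSup_image_eq_and_ge hne hcont.continuousOn
  refine ⟨v, ?_, hve.symm, ?_⟩
  · rintro rfl
    simp at hv
  · intro w
    by_cases hw : w = 0
    · simp [hw]
    have hn : ‖w‖ ≠ 0 := norm_ne_zero_iff.2 hw
    have := hmax (‖w‖⁻¹ • w) (by simp [norm_smul, hn])
    rw [← hve] at this
    simp only [Matrix.mulVec_smul, smul_dotProduct, dotProduct_smul, smul_eq_mul] at this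
    change _ ≤ mx A at this
    have h2 : w ⬝ᵥ (A *ᵥ w) = ‖w‖ ^ 2 * (‖w‖⁻¹ * (‖w‖⁻¹ * w ⬝ᵥ (A *ᵥ w))) := by
      field_simp
    rw [h2]
    gcongr

lemma ND_iff (A : Matrix (Fin 3) (Fin 3) ℝ) : ND A ↔ mx A < 0 := by
  obtain ⟨v, hv, hve, h⟩ := mx_spec A
  constructor
  · intro hA
    rw [← hve]
    exact hA v hv
  · intro hA w hw
    have : 0 < ‖w‖ ^ 2 := by positivity
    nlinarith [h w]

lemma ND_det {A : Matrix (Fin 3) (Fin 3) ℝ} (hs : A.IsSymm) (h : ND A) : A.det < 0 := by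
  have hp : (-A).PosDef := by
    refine Matrix.PosDef.of_dotProduct_mulVec_pos ?_ ?_
    · rw [Matrix.IsHermitian, Matrix.conjTranspose_eq_transpose_of_trivial, Matrix.transpose_neg, hs]
    · intro v hv
      have := h v hv
      simp only [star_trivial, Matrix.neg_mulVec, dotProduct_neg]
      linarith
  have := hp.det_pos
  rw [Matrix.det_neg] at this
  simp at this
  linarith

lemma mx_zero_det {A : Matrix (Fin 3) (Fin 3) ℝ} (hs : A.IsSymm) (h : mx A = 0) : A.det = 0 := by
  obtain ⟨v, hv, hve, hm⟩ := mx_spec A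
  have hp : (-A).PosSemidef := by
    refine Matrix.PosSemidef.of_dotProduct_mulVec_nonneg ?_ ?_
    · rw [Matrix.IsHermitian, Matrix.conjTranspose_eq_transpose_of_trivial, Matrix.transpose_neg, hs]
    · intro w
      have := hm w
      simp only [star_trivial, Matrix.neg_mulVec, dotProduct_neg]
      rw [h, mul_zero] at this
      linarith
  have h0 : (-A) *ᵥ v = 0 := by
    rw [← hp.dotProduct_mulVec_zero_iff]
    simp [Matrix.neg_mulVec, hve, h]
  rw [Matrix.neg_mulVec, neg_eq_zero] at h0
  exact Matrix.exists_mulVec_eq_zero_iff.1 ⟨v, hv, h0⟩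

/-- crossing from negative definite to not negative definite produces a zero of the determinant -/
lemma exists_zero {F : ℝ → Matrix (Fin 3) (Fin 3) ℝ} (hF : Continuous F) (hs : ∀ x, (F x).IsSymm)
    {u v : ℝ} (hu : ND (F u)) (hv : ¬ ND (F v)) : ∃ x ∈ Set.uIcc u v, (F x).det = 0 := by
  rw [ND_iff] at hu hv
  have hc : ContinuousOn (fun x => mx (F x)) (Set.uIcc u v) := (mx_cont.comp hF).continuousOn
  have := intermediate_value_uIcc hc
  obtain ⟨x, hx, hx0⟩ := this (Set.mem_uIcc.2 (Or.inl ⟨hu.le, not_lt.1 hv⟩))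
  exact ⟨x, hx, mx_zero_det (hs x) hx0⟩

lemma neg_of_no_zero {q : ℝ → ℝ} (hq : Continuous q) {u v : ℝ} (hu : q u < 0)
    (hz : ∀ x ∈ Set.uIcc u v, q x ≠ 0) : q v < 0 := by
  by_contra hv
  obtain ⟨x, hx, hx0⟩ := intermediate_value_uIcc (hq.continuousOn (s := Set.uIcc u v))
    (Set.mem_uIcc.2 (Or.inl ⟨hu.le, not_lt.1 hv⟩))
  exact hz x hx hx0

lemma two_zeros {F : ℝ → Matrix (Fin 3) (Fin 3) ℝ} (hF : Continuous F) (hs : ∀ x, (F x).IsSymm)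
    (hns : ∀ x, (F x).det = 0 → ¬ IsLocalMax (fun y => (F y).det) x)
    {u x v : ℝ} (hux : u < x) (hxv : x < v) (hu : ND (F u)) (hx : ¬ ND (F x)) (hv : ND (F v)) :
    ∃ y z, u < y ∧ y < z ∧ z < v ∧ (F y).det = 0 ∧ (F z).det = 0 := by
  have hq : Continuous (fun y => (F y).det) := hF.matrix_det
  have hdu := ND_det (hs u) hu
  have hdv := ND_det (hs v) hv
  obtain ⟨y, hy, hy0⟩ := exists_zero hF hs hu hx
  obtain ⟨z, hz, hz0⟩ := exists_zero hF hs hv hx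
  rw [Set.uIcc_of_le hux.le] at hy
  rw [Set.uIcc_of_ge hxv.le] at hz
  have huy : u < y := lt_of_le_of_ne hy.1 (by rintro rfl; exact hdu.ne hy0)
  have hzv : z < v := lt_of_le_of_ne hz.2 (by rintro rfl; exact hdv.ne hz0)
  rcases lt_or_eq_of_le (hy.2.trans hz.1) with h | h
  · exact ⟨y, z, huy, h, hzv, hy0, hz0⟩
  · subst h
    by_contra hno
    push Not at hno
    apply hns y hy0
    filter_upwards [Ioo_mem_nhds huy hzv] with w hw
    rw [hy0]
    rcases lt_trichotomy w y with h | h | h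
    · refine (neg_of_no_zero hq hdu (v := w) ?_).le
      intro t ht ht0
      rw [Set.uIcc_of_le hw.1.le] at ht
      have : u < t := lt_of_le_of_ne ht.1 (by rintro rfl; exact hdu.ne ht0)
      exact hno t y this (ht.2.trans_lt h) hzv ht0 hy0
    · rw [h, hy0]
    · refine (neg_of_no_zero hq hdv (v := w) ?_).le
      intro t ht ht0
      rw [Set.uIcc_of_ge hw.2.le] at ht
      have : t < v := lt_of_le_of_ne ht.2 (by rintro rfl; exact hdv.ne ht0)
      exact hno y t huy (h.trans_le ht.1) this hy0 ht0

lemma AA_symm {M₁ M₂ M₃ : Matrix (Fin 3) (Fin 3) ℝ}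
    (hM₁ : M₁.IsSymm) (hM₂ : M₂.IsSymm) (hM₃ : M₃.IsSymm) (s w : ℝ) : (AA M₁ M₂ M₃ s w).IsSymm := by
  ext i j
  simp only [AA, Matrix.transpose_apply, Matrix.of_apply, hM₁.apply i j, hM₂.apply i j, hM₃.apply i j]

lemma AA_cont (M₁ M₂ M₃ : Matrix (Fin 3) (Fin 3) ℝ) :
    Continuous (fun z : ℝ × ℝ => AA M₁ M₂ M₃ z.1 z.2) := by
  unfold AA
  refine continuous_matrix fun i j => ?_
  simp only [Matrix.of_apply]
  fun_prop

lemma AA_smul (M₁ M₂ M₃ : Matrix (Fin 3) (Fin 3) ℝ) (k s w : ℝ) :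
    AA M₁ M₂ M₃ (k * s) (k * w) = k ^ 2 • AA M₁ M₂ M₃ s w := by
  ext i j
  simp only [AA, Matrix.of_apply, Matrix.smul_apply, smul_eq_mul]
  ring

lemma ND_smul {k : ℝ} (hk : k ≠ 0) (A : Matrix (Fin 3) (Fin 3) ℝ) : ND (k ^ 2 • A) ↔ ND A := by
  have hk2 : 0 < k ^ 2 := by positivity
  unfold ND
  refine forall_congr' fun v => forall_congr' fun _ => ?_
  rw [Matrix.smul_mulVec, dotProduct_smul, smul_eq_mul]
  constructor
  · intro h; by_contra hh; nlinarith
  · intro h; nlinarith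

lemma not_localMax (M₁ M₂ M₃ : Matrix (Fin 3) (Fin 3) ℝ)
    (hsf : Squarefree (binarySextic M₁ M₂ M₃)) (a b c d : ℝ) (hD : a * d - b * c ≠ 0) (x : ℝ)
    (h0 : (AA M₁ M₂ M₃ (a * x + c) (b * x + d)).det = 0) :
    ¬ IsLocalMax (fun y => (AA M₁ M₂ M₃ (a * y + c) (b * y + d)).det) x := by
  intro hmax
  apply simple_zero M₁ M₂ M₃ hsf a b (a * x + c) (b * x + d) (by ring_nf; ring_nf at hD; exact hD) h0
  set A := AA M₁ M₂ M₃ a b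
  set C := AA M₁ M₂ M₃ (a * x + c) (b * x + d) with hC
  set B := BB M₁ M₂ M₃ a b (a * x + c) (b * x + d)
  have hexp : (fun y => (AA M₁ M₂ M₃ (a * y + c) (b * y + d)).det) =
      fun y => (y - x) * c1 B C + (y - x) ^ 2 * rr A B C (y - x) 1 := by
    funext y
    have h := AA_comb M₁ M₂ M₃ a b (a * x + c) (b * x + d) (y - x) 1
    have h' := det_expand A B C (y - x) 1
    rw [show a * y + c = a * (y - x) + (a * x + c) * 1 by ring,
      show b * y + d = b * (y - x) + (b * x + d) * 1 by ring, h, h', h0]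
    ring
  have hR : Differentiable ℝ (fun y => rr A B C (y - x) 1) := by
    simp only [rr, l2]
    fun_prop
  have hd : HasDerivAt (fun y => (y - x) * c1 B C + (y - x) ^ 2 * rr A B C (y - x) 1) (c1 B C) x := by
    have h1 : HasDerivAt (fun y : ℝ => y - x) 1 x := (hasDerivAt_id x).sub_const x
    have := (h1.mul_const (c1 B C)).add ((h1.pow 2).mul (hR x).hasDerivAt)
    exact this.congr_deriv (by simp)
  rw [hexp] at hmax
  exact hmax.hasDerivAt_eq_zero hd

lemma card_zeros (M₁ M₂ M₃ : Matrix (Fin 3) (Fin 3) ℝ) (a b c d u : ℝ)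
    (hu : (AA M₁ M₂ M₃ (a * u + c) (b * u + d)).det ≠ 0)
    (Z : Fin 8 → ℝ) (hZ : Function.Injective Z)
    (h0 : ∀ i, (AA M₁ M₂ M₃ (a * Z i + c) (b * Z i + d)).det = 0) : False := by
  let A := AA M₁ M₂ M₃ a b
  let B := BB M₁ M₂ M₃ a b c d
  let C := AA M₁ M₂ M₃ c d
  let e : Fin 3 → Fin 3 → Polynomial ℝ := fun i j =>
    Polynomial.X ^ 2 * Polynomial.C (A i j) + Polynomial.X * Polynomial.C (2 * B i j)
      + Polynomial.C (C i j)
  have he : ∀ i j, (e i j).natDegree ≤ 2 := by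
    intro i j
    simp only [e]
    compute_degree
  let P : Polynomial ℝ := (Matrix.of e).det
  have hP : ∀ x, P.eval x = (AA M₁ M₂ M₃ (a * x + c) (b * x + d)).det := by
    intro x
    have h := AA_comb M₁ M₂ M₃ a b c d x 1
    rw [mul_one, mul_one] at h
    rw [h]
    have := RingHom.map_det (Polynomial.evalRingHom x) (Matrix.of e)
    change P.eval x = _ at this
    rw [this]
    congr 1
    ext i j
    simp [AA, e, A, B, C]
    ring
  have hdeg : P.natDegree ≤ 6 := by
    have h3 : ∀ i j k l m n, (e i j * e k l * e m n).natDegree ≤ 6 := by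
      intro i j k l m n
      refine (Polynomial.natDegree_mul_le_of_le (Polynomial.natDegree_mul_le_of_le (he i j) (he k l))
        (he m n)).trans (by norm_num)
    have hsub : ∀ p q : Polynomial ℝ, p.natDegree ≤ 6 → q.natDegree ≤ 6 → (p - q).natDegree ≤ 6 :=
      fun p q hp hq => (Polynomial.natDegree_sub_le p q).trans (max_le hp hq)
    have hadd : ∀ p q : Polynomial ℝ, p.natDegree ≤ 6 → q.natDegree ≤ 6 → (p + q).natDegree ≤ 6 :=
      fun p q hp hq => (Polynomial.natDegree_add_le p q).trans (max_le hp hq)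
    simp only [P, Matrix.det_fin_three, Matrix.of_apply]
    exact hsub _ _ (hadd _ _ (hadd _ _ (hsub _ _ (hsub _ _ (h3 _ _ _ _ _ _) (h3 _ _ _ _ _ _))
      (h3 _ _ _ _ _ _)) (h3 _ _ _ _ _ _)) (h3 _ _ _ _ _ _)) (h3 _ _ _ _ _ _)
  have hne : P ≠ 0 := by
    intro h
    apply hu
    rw [← hP, h, Polynomial.eval_zero]
  have : (Finset.univ.image Z).card ≤ P.natDegree := by
    apply Polynomial.card_le_degree_of_subset_roots
    intro x hx
    simp only [Finset.mem_val, Finset.mem_image, Finset.mem_univ, true_and] at hx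
    obtain ⟨i, rfl⟩ := hx
    rw [Polynomial.mem_roots hne, Polynomial.IsRoot, hP, h0]
  rw [Finset.card_image_of_injective _ hZ] at this
  simp at this
  omega

/-- The one-variable core statement. -/
lemma core {M₁ M₂ M₃ : Matrix (Fin 3) (Fin 3) ℝ}
    (hM₁ : M₁.IsSymm) (hM₂ : M₂.IsSymm) (hM₃ : M₃.IsSymm)
    (hsf : Squarefree (binarySextic M₁ M₂ M₃)) (a b c d : ℝ) (hD : a * d - b * c ≠ 0)
    (hab : ND (AA M₁ M₂ M₃ a b)) (x : Fin 4 → ℝ)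
    (hx : ∀ i, ¬ ND (AA M₁ M₂ M₃ (a * x i + c) (b * x i + d)))
    (hgap : ∀ i j, i < j → ∃ u, x i < u ∧ u < x j ∧ ND (AA M₁ M₂ M₃ (a * u + c) (b * u + d))) :
    False := by
  set F : ℝ → Matrix (Fin 3) (Fin 3) ℝ := fun y => AA M₁ M₂ M₃ (a * y + c) (b * y + d) with hFdef
  have hF : Continuous F :=
    (AA_cont M₁ M₂ M₃).comp (f := fun y => (a * y + c, b * y + d)) (by fun_prop)
  have hs : ∀ y, (F y).IsSymm := fun y => AA_symm hM₁ hM₂ hM₃ _ _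
  have hns : ∀ y, (F y).det = 0 → ¬ IsLocalMax (fun y => (F y).det) y := fun y hy =>
    not_localMax M₁ M₂ M₃ hsf a b c d hD y hy
  have hinf : ∃ ε > 0, ∀ t : ℝ, |t| < ε → ND (AA M₁ M₂ M₃ (a + t * c) (b + t * d)) := by
    have hc : Continuous (fun t : ℝ => mx (AA M₁ M₂ M₃ (a + t * c) (b + t * d))) :=
      mx_cont.comp ((AA_cont M₁ M₂ M₃).comp (f := fun t : ℝ => (a + t * c, b + t * d)) (by fun_prop))
    have h0 : mx (AA M₁ M₂ M₃ (a + 0 * c) (b + 0 * d)) < 0 := by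
      rw [← ND_iff]; simpa using hab
    have := hc.continuousAt.eventually_lt continuousAt_const h0
    obtain ⟨ε, hε, h⟩ := Metric.eventually_nhds_iff.1 this
    refine ⟨ε, hε, fun t ht => (ND_iff _).2 (h ?_)⟩
    simpa [Real.dist_eq] using ht
  obtain ⟨ε, hε, hinf⟩ := hinf
  have hfar : ∀ y : ℝ, ε⁻¹ < |y| → ND (F y) := by
    intro y hy
    have hpos : 0 < |y| := (inv_pos.2 hε).trans hy
    have hy0 : y ≠ 0 := abs_pos.1 hpos
    have h := hinf y⁻¹ (by rw [abs_inv]; exact inv_lt_of_inv_lt₀ hε hy)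
    rw [← ND_smul hy0, ← AA_smul] at h
    convert h using 2 <;> field_simp
  obtain ⟨u1, h1, h1', hu1⟩ := hgap 0 1 (by decide)
  obtain ⟨u2, h2, h2', hu2⟩ := hgap 1 2 (by decide)
  obtain ⟨u3, h3, h3', hu3⟩ := hgap 2 3 (by decide)
  obtain ⟨u0, h0, hu0⟩ : ∃ u0, u0 < x 0 ∧ ND (F u0) := by
    refine ⟨-(|x 0| + ε⁻¹ + 1), ?_, hfar _ ?_⟩
    · have := neg_abs_le (x 0)
      have := inv_pos.2 hε
      linarith
    · have := abs_nonneg (x 0)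
      have := inv_pos.2 hε
      rw [abs_neg, abs_of_pos (by linarith)]
      linarith
  obtain ⟨u4, h4, hu4⟩ : ∃ u4, x 3 < u4 ∧ ND (F u4) := by
    refine ⟨|x 3| + ε⁻¹ + 1, ?_, hfar _ ?_⟩
    · have := le_abs_self (x 3)
      have := inv_pos.2 hε
      linarith
    · have := abs_nonneg (x 3)
      have := inv_pos.2 hε
      rw [abs_of_pos (by linarith)]
      linarith
  obtain ⟨y0, z0, p0, q0, r0, hy0, hz0⟩ := two_zeros hF hs hns h0 h1 hu0 (hx 0) hu1
  obtain ⟨y1, z1, p1, q1, r1, hy1, hz1⟩ := two_zeros hF hs hns h1' h2 hu1 (hx 1) hu2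
  obtain ⟨y2, z2, p2, q2, r2, hy2, hz2⟩ := two_zeros hF hs hns h2' h3 hu2 (hx 2) hu3
  obtain ⟨y3, z3, p3, q3, r3, hy3, hz3⟩ := two_zeros hF hs hns h3' h4 hu3 (hx 3) hu4
  refine card_zeros M₁ M₂ M₃ a b c d u1 (ND_det (hs u1) hu1).ne
    ![y0, z0, y1, z1, y2, z2, y3, z3] ?_ ?_
  · apply StrictMono.injective
    rw [Fin.strictMono_iff_lt_succ]
    intro i
    fin_cases i <;> simp <;> linarith
  · intro i
    fin_cases i
    exacts [hy0, hz0, hy1, hz1, hy2, hz2, hy3, hz3]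

lemma form_eq (M₁ M₂ M₃ : Matrix (Fin 3) (Fin 3) ℝ) (s w : ℝ) (v : Fin 3 → ℝ) :
    v ⬝ᵥ (AA M₁ M₂ M₃ s w *ᵥ v) = s ^ 2 * (v ⬝ᵥ (M₁ *ᵥ v)) + 2 * s * w * (v ⬝ᵥ (M₂ *ᵥ v))
      + w ^ 2 * (v ⬝ᵥ (M₃ *ᵥ v)) := by
  have : AA M₁ M₂ M₃ s w = s ^ 2 • M₁ + (2 * s * w) • M₂ + w ^ 2 • M₃ := by
    ext i j
    simp [AA]
  rw [this]
  simp only [Matrix.add_mulVec, Matrix.smul_mulVec, dotProduct_add, dotProduct_smul, smul_eq_mul]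

lemma ND_inv (M₁ M₂ M₃ : Matrix (Fin 3) (Fin 3) ℝ) (t t' : {x : Fin 2 → ℝ // x ≠ 0})
    (h : Quot.mk (projRel 2) t = Quot.mk (projRel 2) t') :
    ND (AA M₁ M₂ M₃ (t.1 0) (t.1 1)) ↔ ND (AA M₁ M₂ M₃ (t'.1 0) (t'.1 1)) := by
  have hl : ∀ t t' : {x : Fin 2 → ℝ // x ≠ 0}, projRel 2 t t' →
      ND (AA M₁ M₂ M₃ (t.1 0) (t.1 1)) = ND (AA M₁ M₂ M₃ (t'.1 0) (t'.1 1)) := by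
    rintro t t' ⟨k, hk, hkt⟩
    rw [← hkt]
    simp only [Pi.smul_apply, smul_eq_mul, AA_smul, ND_smul hk]
  exact iff_of_eq (congrArg (Quot.lift _ hl) h)

lemma RP_preconnected : PreconnectedSpace (RP 2) := by
  have h : IsConnected ({0}ᶜ : Set (Fin 2 → ℝ)) :=
    isConnected_compl_singleton_of_one_lt_rank (by simp) 0
  have : PreconnectedSpace {x : Fin 2 → ℝ // x ≠ 0} :=
    isPreconnected_iff_preconnectedSpace.1 h.isPreconnected
  have hc : Continuous (Quot.mk (projRel 2)) := continuous_quot_mk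
  have hr := isPreconnected_range hc
  rw [Quot.mk_surjective.range_eq] at hr
  exact ⟨hr⟩

lemma same_comp {T : Type*} [TopologicalSpace T] (S : Set T) (g : ℝ → T) (hg : Continuous g)
    (y z : ℝ) (hyz : y ≤ z) (h : ∀ x ∈ Set.Icc y z, g x ∈ S) :
    (ConnectedComponents.mk (⟨g y, h y ⟨le_rfl, hyz⟩⟩ : S)) =
      ConnectedComponents.mk (⟨g z, h z ⟨hyz, le_rfl⟩⟩ : S) := by
  let G : Set.Icc y z → S := fun x => ⟨g x, h x x.2⟩
  have hG : Continuous G := by fun_prop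
  have hpre : IsPreconnected (Set.range G) := by
    have : PreconnectedSpace (Set.Icc y z) :=
      isPreconnected_iff_preconnectedSpace.1 isPreconnected_Icc
    exact isPreconnected_range hG
  rw [ConnectedComponents.coe_eq_coe']
  exact hpre.subset_connectedComponent (x := G ⟨z, hyz, le_rfl⟩) ⟨_, rfl⟩ ⟨⟨y, le_rfl, hyz⟩, rfl⟩

end QB

open Matrix in
/-- If the binary sextic `p(t₀,t₁) = det(t₀²M₁ + 2t₀t₁M₂ + t₁²M₃)` is nonzero and squarefree
over `ℂ` (equivalently, the genus 2 curve `Γ : y² = −p` is smooth), then the image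
`S₁ ⊆ ℝP¹` of the real points of the quadric surface bundle `π₁ : Y → ℙ¹` has at most three
connected components. -/
theorem image_of_quadric_bundle_at_most_three_components
    (M₁ M₂ M₃ : Matrix (Fin 3) (Fin 3) ℝ)
    (hM₁ : M₁.IsSymm) (hM₂ : M₂.IsSymm) (hM₃ : M₃.IsSymm)
    (Q₁ Q₂ Q₃ : (Fin 3 → ℝ) → ℝ)
    (hQ₁ : ∀ v, Q₁ v = v ⬝ᵥ (M₁ *ᵥ v)) (hQ₂ : ∀ v, Q₂ v = v ⬝ᵥ (M₂ *ᵥ v))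
    (hQ₃ : ∀ v, Q₃ v = v ⬝ᵥ (M₃ *ᵥ v))
    (hp : binarySextic M₁ M₂ M₃ ≠ 0) (hsf : Squarefree (binarySextic M₁ M₂ M₃))
    (S₁ : Set (RP 2))
    (hS₁ : S₁ = {x | ∃ t : {x : Fin 2 → ℝ // x ≠ 0}, Quot.mk (projRel 2) t = x ∧
      ∃ v : Fin 3 → ℝ, v ≠ 0 ∧
        0 ≤ (t : Fin 2 → ℝ) 0 ^ 2 * Q₁ v
          + 2 * (t : Fin 2 → ℝ) 0 * (t : Fin 2 → ℝ) 1 * Q₂ v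
          + (t : Fin 2 → ℝ) 1 ^ 2 * Q₃ v}) :
    ∃ f : ConnectedComponents ↥S₁ → Fin 3, Function.Injective f := by
  have hmem : ∀ t : {x : Fin 2 → ℝ // x ≠ 0}, (Quot.mk (projRel 2) t : RP 2) ∈ S₁ ↔
      ¬ QB.ND (QB.AA M₁ M₂ M₃ (t.1 0) (t.1 1)) := by
    intro t
    rw [hS₁]
    constructor
    · rintro ⟨t', ht', v, hv, h⟩
      rw [← QB.ND_inv M₁ M₂ M₃ t' t ht']
      intro hn
      have := hn v hv
      rw [QB.form_eq, ← hQ₁, ← hQ₂, ← hQ₃] at this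
      linarith
    · intro hn
      unfold QB.ND at hn
      push Not at hn
      obtain ⟨v, hv, h⟩ := hn
      rw [QB.form_eq, ← hQ₁, ← hQ₂, ← hQ₃] at h
      exact ⟨t, rfl, v, hv, h⟩
  by_cases hU : ∃ t : {x : Fin 2 → ℝ // x ≠ 0}, QB.ND (QB.AA M₁ M₂ M₃ (t.1 0) (t.1 1))
  · obtain ⟨⟨e, he⟩, hND⟩ := hU
    set a := e 0 with ha
    set b := e 1 with hb
    simp only [← ha, ← hb] at hND
    have hab : 0 < a ^ 2 + b ^ 2 := by
      by_contra hcon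
      apply he
      have h1 : a = 0 := by nlinarith [sq_nonneg a, sq_nonneg b]
      have h2 : b = 0 := by nlinarith [sq_nonneg a, sq_nonneg b]
      ext i
      fin_cases i
      · exact h1
      · exact h2
    have hg0 : ∀ x : ℝ, (![a * x + -b, b * x + a] : Fin 2 → ℝ) ≠ 0 := by
      intro x hx
      have h1 : a * x + -b = 0 := by simpa using congrFun hx 0
      have h2 : b * x + a = 0 := by simpa using congrFun hx 1
      have : a ^ 2 + b ^ 2 = 0 := by linear_combination a * h2 - b * h1
      exact hab.ne' this
    let g : ℝ → RP 2 := fun x => Quot.mk (projRel 2) ⟨![a * x + -b, b * x + a], hg0 x⟩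
    have hg : Continuous g := by
      have h1 : Continuous (fun x : ℝ => (⟨![a * x + -b, b * x + a], hg0 x⟩ :
          {x : Fin 2 → ℝ // x ≠ 0})) := by
        refine Continuous.subtype_mk (continuous_pi fun i => ?_) _
        fin_cases i
        · simp; fun_prop
        · simp; fun_prop
      exact continuous_quot_mk.comp h1
    have hgS : ∀ x, g x ∈ S₁ ↔ ¬ QB.ND (QB.AA M₁ M₂ M₃ (a * x + -b) (b * x + a)) := by
      intro x
      exact hmem ⟨![a * x + -b, b * x + a], hg0 x⟩
    have hsurj : ∀ s : S₁, ∃ x, g x = s.1 := by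
      rintro ⟨s, hs⟩
      obtain ⟨⟨t, ht⟩, rfl⟩ := Quot.exists_rep s
      have hs' := (hmem _).1 hs
      simp only at hs'
      have hk : a * t 1 - b * t 0 ≠ 0 := by
        intro hk
        apply hs'
        have e0 : t 0 = ((a * t 0 + b * t 1) / (a ^ 2 + b ^ 2)) * a := by
          field_simp
          linear_combination (-b) * hk
        have e1 : t 1 = ((a * t 0 + b * t 1) / (a ^ 2 + b ^ 2)) * b := by
          field_simp
          linear_combination (a) * hk
        have hk0 : (a * t 0 + b * t 1) / (a ^ 2 + b ^ 2) ≠ 0 := by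
          intro h
          rw [h, zero_mul] at e0 e1
          apply ht
          ext i
          fin_cases i
          · exact e0
          · exact e1
        have h := hND
        rw [← QB.ND_smul hk0, ← QB.AA_smul, ← e0, ← e1] at h
        exact h
      refine ⟨(a * t 0 + b * t 1) / (a * t 1 - b * t 0), Quot.sound ?_⟩
      refine ⟨(a * t 1 - b * t 0) / (a ^ 2 + b ^ 2), div_ne_zero hk hab.ne', ?_⟩
      ext i
      fin_cases i
      · simp
        field_simp
        ring
      · simp
        field_simp
        ring
    by_contra hno
    have hcard : (4 : Cardinal) ≤ Cardinal.mk (ConnectedComponents S₁) := by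
      by_contra h
      apply hno
      have h3 : Cardinal.mk (ConnectedComponents S₁) ≤ (3 : ℕ) := by
        rw [not_le] at h
        have : ((4 : ℕ) : Cardinal) = Order.succ ((3 : ℕ) : Cardinal) := by
          rw [Cardinal.succ_natCast]; norm_num
        have h' : Cardinal.mk (ConnectedComponents S₁) < ((4 : ℕ) : Cardinal) := by exact_mod_cast h
        rw [this] at h'
        exact Order.lt_succ_iff.1 h'
      rw [← Cardinal.mk_fin 3] at h3
      obtain ⟨f⟩ := Cardinal.le_def _ _ |>.1 h3
      exact ⟨f, f.injective⟩
    have hcard' : Cardinal.mk (Fin 4) ≤ Cardinal.mk (ConnectedComponents S₁) := by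
      simpa using hcard
    obtain ⟨k⟩ := Cardinal.le_def _ _ |>.1 hcard'
    have hrep : ∀ i, ∃ x : ℝ, ∃ hx : g x ∈ S₁, ConnectedComponents.mk (⟨g x, hx⟩ : S₁) = k i := by
      intro i
      obtain ⟨s, hs⟩ := ConnectedComponents.surjective_coe (k i)
      obtain ⟨x, hx⟩ := hsurj s
      refine ⟨x, by rw [hx]; exact s.2, ?_⟩
      rw [← hs]
      congr 1
      exact Subtype.ext hx
    choose x hx hxk using hrep
    have hxinj : Function.Injective x := by
      intro i j hij
      apply k.injective
      rw [← hxk, ← hxk]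
      congr 2
      rw [hij]
    have hc4 : (Finset.univ.image x).card = 4 := by
      rw [Finset.card_image_of_injective _ hxinj]
      simp
    let y := (Finset.univ.image x).orderEmbOfFin hc4
    have hy : ∀ i, ∃ j, x j = y i := by
      intro i
      have := Finset.orderEmbOfFin_mem (Finset.univ.image x) hc4 i
      obtain ⟨j, -, hj⟩ := Finset.mem_image.1 this
      exact ⟨j, hj⟩
    refine QB.core hM₁ hM₂ hM₃ hsf a b (-b) a (by nlinarith) hND y ?_ ?_
    · intro i
      obtain ⟨j, hj⟩ := hy i
      rw [← hj, ← hgS]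
      exact hx j
    · intro i j hij
      have hlt : y i < y j := y.strictMono hij
      obtain ⟨i', hi'⟩ := hy i
      obtain ⟨j', hj'⟩ := hy j
      rw [← hi', ← hj'] at hlt ⊢
      by_contra hcon
      push Not at hcon
      have hall : ∀ u ∈ Set.Icc (x i') (x j'), g u ∈ S₁ := by
        intro u hu
        rcases eq_or_lt_of_le hu.1 with h | h
        · rw [← h]; exact hx i'
        rcases eq_or_lt_of_le hu.2 with h' | h'
        · rw [h']; exact hx j'
        rw [hgS]
        exact hcon u h h'
      have := QB.same_comp S₁ g hg (x i') (x j') hlt.le hall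
      rw [hxk i', hxk j'] at this
      have := k.injective this
      rw [this] at hlt
      exact lt_irrefl _ hlt
  · push Not at hU
    have huniv : S₁ = Set.univ := by
      ext s
      obtain ⟨t, rfl⟩ := Quot.exists_rep s
      exact ⟨fun _ => Set.mem_univ _, fun _ => (hmem t).2 (hU t)⟩
    have hpre : PreconnectedSpace S₁ := by
      rw [huniv]
      have := QB.RP_preconnected
      exact isPreconnected_iff_preconnectedSpace.1 isPreconnected_univ
    refine ⟨fun _ => 0, fun p q _ => ?_⟩
    exact Subsingleton.elim p q
end

section
/- Let Q₁, Q₂, Q₃ : ℝ³ → ℝ be real quadratic forms with symmetric matrices M₁, M₂, M₃, let f := Q₁Q₃ − Q₂², and assume: (i) fderiv ℝ f P ≠ 0 for every P ∈ ℝ³∖{0} with f(P) = 0; (ii) the binary sextic p(t₀, t₁) := det(t₀²M₁ + 2t₀t₁M₂ + t₁²M₃) is nonzero and squarefree in ℂ[t₀, t₁]. Let ℝP² be the quotient topological space of ℝ³∖{0} by the scaling action of ℝ∖{0}, let S₂ := { [P] ∈ ℝP² : Q₁(P) ≥ 0 ∨ f(P) ≤ 0 } and Z := { [P] ∈ ℝP²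 : f(P) = 0 } (both conditions are well-defined since Q₁ and f are homogeneous of even degree). If S₂ is nonempty and not connected, then the number of connected components of S₂ equals the number of connected components of Z, and this common number is 2 or 3. (That is, if the real locus Y(ℝ) of the conic bundle is disconnected, then Δ(ℝ) consists of two or three ovals, with the same number of components as Y(ℝ).) -/
namespace QuarticAux

open Set Filter Topology

/-- The class in `RP 3` of a nonzero vector. -/
def pt (v : Fin 3 → ℝ) (h : v ≠ 0) : RP 3 := Quot.mk (projRel 3) ⟨v, h⟩

lemma continuous_mk : Continuous (fun P : {v : Fin 3 → ℝ // v ≠ 0} => (Quot.mk (projRel 3) P : RP 3)) :=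
  continuous_quot_mk

lemma continuous_pt {α : Type*} [TopologicalSpace α] {g : α → Fin 3 → ℝ} (hg : Continuous g)
    (h : ∀ a, g a ≠ 0) : Continuous (fun a => pt (g a) (h a)) :=
  continuous_mk.comp (hg.subtype_mk h)

lemma exists_pt (x : RP 3) : ∃ v h, x = pt v h := by
  induction x using Quot.ind with
  | mk P => exact ⟨P.1, P.2, rfl⟩

lemma pt_eq_of_smul {v w : Fin 3 → ℝ} (hv : v ≠ 0) (hw : w ≠ 0) (c : ℝ) (hc : c ≠ 0)
    (h : c • v = w) : pt v hv = pt w hw :=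
  Quot.sound ⟨c, hc, h⟩

lemma projRel_equiv : Equivalence (projRel 3) := by
  refine ⟨fun v => ⟨1, one_ne_zero, one_smul _ _⟩, ?_, ?_⟩
  · rintro v w ⟨c, hc, h⟩
    refine ⟨c⁻¹, inv_ne_zero hc, ?_⟩
    rw [← h, smul_smul, inv_mul_cancel₀ hc, one_smul]
  · rintro u v w ⟨c, hc, h⟩ ⟨d, hd, h'⟩
    refine ⟨d * c, mul_ne_zero hd hc, ?_⟩
    rw [← h', ← h, smul_smul]

lemma smul_of_pt_eq {v w : Fin 3 → ℝ} {hv : v ≠ 0} {hw : w ≠ 0} (h : pt v hv = pt w hw) :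
    ∃ c : ℝ, c ≠ 0 ∧ c • v = w := by
  have := Quot.eqvGen_exact h
  rw [projRel_equiv.eqvGen_iff] at this
  exact this

lemma norm_sq_pos {v : Fin 3 → ℝ} (hv : v ≠ 0) : 0 < v 0 ^ 2 + v 1 ^ 2 + v 2 ^ 2 := by
  by_contra! h
  apply hv
  have h0 : v 0 ^ 2 = 0 := by nlinarith [sq_nonneg (v 0), sq_nonneg (v 1), sq_nonneg (v 2)]
  have h1 : v 1 ^ 2 = 0 := by nlinarith [sq_nonneg (v 0), sq_nonneg (v 1), sq_nonneg (v 2)]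
  have h2 : v 2 ^ 2 = 0 := by nlinarith [sq_nonneg (v 0), sq_nonneg (v 1), sq_nonneg (v 2)]
  ext i
  fin_cases i
  · simpa using h0
  · simpa using h1
  · simpa using h2

/-- The Veronese embedding of the real projective plane. -/
noncomputable def veronese : RP 3 → (Fin 3 → Fin 3 → ℝ) :=
  Quot.lift (fun P => fun i j => P.1 i * P.1 j / (P.1 0 ^ 2 + P.1 1 ^ 2 + P.1 2 ^ 2)) (by
    rintro ⟨v, hv⟩ ⟨w, hw⟩ ⟨c, hc, h⟩
    simp only at h
    subst h
    funext i j
    have := norm_sq_pos hv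
    have h2 : (c • v) 0 ^ 2 + (c • v) 1 ^ 2 + (c • v) 2 ^ 2
        = c ^ 2 * (v 0 ^ 2 + v 1 ^ 2 + v 2 ^ 2) := by
      simp only [Pi.smul_apply, smul_eq_mul]; ring
    simp only [h2]
    simp only [Pi.smul_apply, smul_eq_mul]
    field_simp)

lemma continuous_veronese : Continuous veronese := by
  refine continuous_quot_lift _ ?_
  refine continuous_pi fun i => continuous_pi fun j => ?_
  have hc : ∀ k : Fin 3, Continuous (fun P : {v : Fin 3 → ℝ // v ≠ 0} => P.1 k) := fun k =>
    (continuous_apply k).comp continuous_subtype_val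
  refine Continuous.div ((hc i).mul (hc j)) ((((hc 0).pow 2).add ((hc 1).pow 2)).add ((hc 2).pow 2)) fun P => (norm_sq_pos P.2).ne'

lemma injective_veronese : Function.Injective veronese := by
  intro x y hxy
  obtain ⟨v, hv, rfl⟩ := exists_pt x
  obtain ⟨w, hw, rfl⟩ := exists_pt y
  have hv2 := norm_sq_pos hv
  have hw2 := norm_sq_pos hw
  set V := v 0 ^ 2 + v 1 ^ 2 + v 2 ^ 2 with hV
  set W := w 0 ^ 2 + w 1 ^ 2 + w 2 ^ 2 with hW
  have key : ∀ i j, v i * v j / V = w i * w j / W := fun i j => congrFun (congrFun hxy i) j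
  obtain ⟨k, hk⟩ : ∃ k, v k ≠ 0 := by
    by_contra! h
    exact hv (funext h)
  have hkk := key k k
  have hwk : w k ≠ 0 := by
    intro h0
    rw [h0] at hkk
    simp only [mul_zero, zero_div, div_eq_zero_iff, mul_self_eq_zero] at hkk
    rcases hkk with h | h
    · exact hk h
    · exact hv2.ne' h
  refine pt_eq_of_smul hv hw (w k / v k) (div_ne_zero hwk hk) ?_
  funext i
  have hki := key k i
  simp only [Pi.smul_apply, smul_eq_mul]
  rw [div_eq_div_iff hv2.ne' hw2.ne'] at hki hkk
  rw [div_mul_eq_mul_div, div_eq_iff hk]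
  have h3 : v k * W ≠ 0 := mul_ne_zero hk hw2.ne'
  apply mul_right_cancel₀ h3
  linear_combination (w k) * hki - (w i) * hkk

instance : T2Space (RP 3) := T2Space.of_injective_continuous injective_veronese continuous_veronese

end QuarticAux

namespace QuarticAux

open Set Filter Topology Matrix

lemma quad_comb (M : Matrix (Fin 3) (Fin 3) ℝ) (hM : M.IsSymm) (v w : Fin 3 → ℝ) (a b : ℝ) :
    (a • v + b • w) ⬝ᵥ (M *ᵥ (a • v + b • w)) =
      a ^ 2 * (v ⬝ᵥ (M *ᵥ v)) + 2 * (a * b) * (v ⬝ᵥ (M *ᵥ w)) + b ^ 2 * (w ⬝ᵥ (M *ᵥ w)) := by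
  have h10 := hM.apply 0 1
  have h20 := hM.apply 0 2
  have h21 := hM.apply 1 2
  simp only [Matrix.mulVec, dotProduct, Fin.sum_univ_three, Pi.add_apply, Pi.smul_apply,
    smul_eq_mul, h10, h20, h21]
  ring

lemma quad_smul (M : Matrix (Fin 3) (Fin 3) ℝ) (v : Fin 3 → ℝ) (a : ℝ) :
    (a • v) ⬝ᵥ (M *ᵥ (a • v)) = a ^ 2 * (v ⬝ᵥ (M *ᵥ v)) := by
  simp only [Matrix.mulVec, dotProduct, Fin.sum_univ_three, Pi.smul_apply, smul_eq_mul]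
  ring

lemma continuous_quad {α : Type*} [TopologicalSpace α] {M : α → Matrix (Fin 3) (Fin 3) ℝ}
    {g : α → Fin 3 → ℝ} (hM : Continuous M) (hg : Continuous g) :
    Continuous (fun a => g a ⬝ᵥ (M a *ᵥ g a)) :=
  hg.dotProduct (hM.matrix_mulVec hg)

/-- The nonnegative locus of a quadratic form in the projective plane. -/
def pos (M : Matrix (Fin 3) (Fin 3) ℝ) : Set (RP 3) :=
  {x | ∃ v h, x = pt v h ∧ 0 ≤ v ⬝ᵥ (M *ᵥ v)}

lemma segment_conn {S : Set (RP 3)} (v w : Fin 3 → ℝ) (hv : v ≠ 0) (hw : w ≠ 0)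
    (h0 : ∀ s ∈ Icc (0 : ℝ) 1, (1 - s) • v + s • w ≠ 0)
    (hS : ∀ s ∈ Icc (0 : ℝ) 1, ∀ h, pt ((1 - s) • v + s • w) h ∈ S) :
    ∃ t, t ⊆ S ∧ pt v hv ∈ t ∧ pt w hw ∈ t ∧ IsPreconnected t := by
  have hc : Continuous (fun s : Icc (0 : ℝ) 1 => pt ((1 - (s : ℝ)) • v + (s : ℝ) • w) (h0 s s.2)) :=
    continuous_pt (by fun_prop) _
  have : PreconnectedSpace (Icc (0 : ℝ) 1) := Subtype.preconnectedSpace isPreconnected_Icc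
  refine ⟨_, ?_, ?_, ?_, isPreconnected_range hc⟩
  · rintro _ ⟨s, rfl⟩
    exact hS s s.2 _
  · refine ⟨⟨0, by simp⟩, ?_⟩
    simp
  · refine ⟨⟨1, by simp⟩, ?_⟩
    simp

lemma pos_preconnected (M : Matrix (Fin 3) (Fin 3) ℝ) (hM : M.IsSymm) : IsPreconnected (pos M) := by
  apply isPreconnected_of_forall_pair
  rintro _ ⟨v, hv, rfl, hqv⟩ _ ⟨w, hw, rfl, hqw⟩
  -- choose the sign of `w`
  obtain ⟨w', hw', hww, hqw', hB⟩ : ∃ (w' : Fin 3 → ℝ) (hw' : w' ≠ 0), pt w hw = pt w' hw' ∧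
      0 ≤ w' ⬝ᵥ (M *ᵥ w') ∧ 0 ≤ v ⬝ᵥ (M *ᵥ w') := by
    rcases le_total 0 (v ⬝ᵥ (M *ᵥ w)) with h | h
    · exact ⟨w, hw, rfl, hqw, h⟩
    · refine ⟨(-1 : ℝ) • w, by simpa using hw, pt_eq_of_smul _ _ (-1) (by norm_num) rfl, ?_, ?_⟩
      · rw [quad_smul]; simpa using hqw
      · rw [mulVec_smul, dotProduct_smul, smul_eq_mul]; linarith
  rw [hww]
  by_cases h0 : ∃ s ∈ Icc (0 : ℝ) 1, (1 - s) • v + s • w' = 0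
  · obtain ⟨s, hs, hs0⟩ := h0
    have hsne : s ≠ 1 := by
      rintro rfl
      simp at hs0
      exact hw' hs0
    have hsne0 : s ≠ 0 := by
      rintro rfl
      simp at hs0
      exact hv hs0
    have : pt v hv = pt w' hw' := by
      refine pt_eq_of_smul _ _ (-(1 - s) / s)
        (div_ne_zero (neg_ne_zero.2 (sub_ne_zero.2 hsne.symm)) hsne0) ?_
      have h1 : s • w' = -((1 - s) • v) := by
        rw [eq_neg_iff_add_eq_zero, add_comm]; exact hs0
      have h2 : w' = s⁻¹ • (s • w') := by rw [smul_smul, inv_mul_cancel₀ hsne0, one_smul]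
      rw [h2, h1, ← neg_smul, smul_smul]
      congr 1
      field_simp
    rw [← this]
    exact ⟨{pt v hv}, by rintro _ rfl; exact ⟨v, hv, rfl, hqv⟩, rfl, rfl, isPreconnected_singleton⟩
  · push Not at h0
    refine segment_conn v w' hv hw' h0 fun s hs h => ⟨_, h, rfl, ?_⟩
    rw [quad_comb M hM]
    have h1 : 0 ≤ 1 - s := by linarith [hs.2]
    have h2 : 0 ≤ s := hs.1
    positivity

/-- Parameters at which the form is not negative definite. -/
def T (M : ℝ → Matrix (Fin 3) (Fin 3) ℝ) : Set ℝ := {s | ∃ v, v ≠ 0 ∧ 0 ≤ v ⬝ᵥ (M s *ᵥ v)}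

lemma closed_param (M : ℝ → Matrix (Fin 3) (Fin 3) ℝ) (hM : Continuous M) (t : Set (RP 3))
    (ht : IsClosed t) : IsClosed {s | (pos (M s) ∩ t).Nonempty} := by
  have hne : ∀ w : Metric.sphere (0 : Fin 3 → ℝ) 1, (w : Fin 3 → ℝ) ≠ 0 := fun w h => by
    have h1 := w.2
    rw [mem_sphere_zero_iff_norm, h] at h1
    simp at h1
  have hc : Continuous (fun w : Metric.sphere (0 : Fin 3 → ℝ) 1 => pt (w : Fin 3 → ℝ) (hne w)) :=
    continuous_pt continuous_subtype_val _
  have hcl : IsClosed {q : ℝ × Metric.sphere (0 : Fin 3 → ℝ) 1 |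
      0 ≤ (q.2 : Fin 3 → ℝ) ⬝ᵥ (M q.1 *ᵥ (q.2 : Fin 3 → ℝ)) ∧ pt (q.2 : Fin 3 → ℝ) (hne q.2) ∈ t} := by
    refine IsClosed.and ?_ ?_
    · exact isClosed_le continuous_const
        (continuous_quad (hM.comp continuous_fst) (continuous_subtype_val.comp continuous_snd))
    · exact ht.preimage (hc.comp continuous_snd)
  have := isClosedMap_fst_of_compactSpace _ hcl
  convert this using 1
  ext s
  constructor
  · rintro ⟨_, ⟨v, hv, rfl, hq⟩, hvt⟩
    have hn : 0 < ‖v‖ := norm_pos_iff.2 hv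
    have hs : ‖v‖⁻¹ • v ∈ Metric.sphere (0 : Fin 3 → ℝ) 1 := by
      rw [mem_sphere_zero_iff_norm, norm_smul, norm_inv, norm_norm, inv_mul_cancel₀ hn.ne']
    refine ⟨(s, ⟨_, hs⟩), ⟨?_, ?_⟩, rfl⟩
    · simp only
      rw [quad_smul]; positivity
    · have : pt v hv = pt (‖v‖⁻¹ • v) (hne ⟨_, hs⟩) :=
        pt_eq_of_smul _ _ ‖v‖⁻¹ (inv_ne_zero hn.ne') rfl
      exact this ▸ hvt
  · rintro ⟨⟨s', w⟩, ⟨h1, h2⟩, rfl⟩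
    exact ⟨_, ⟨_, hne w, rfl, h1⟩, h2⟩

lemma T_eq (M : ℝ → Matrix (Fin 3) (Fin 3) ℝ) : T M = {s | (pos (M s) ∩ univ).Nonempty} := by
  ext s
  constructor
  · rintro ⟨v, hv, h⟩
    exact ⟨_, ⟨v, hv, rfl, h⟩, trivial⟩
  · rintro ⟨_, ⟨v, hv, rfl, h⟩, -⟩
    exact ⟨v, hv, h⟩

lemma T_closed (M : ℝ → Matrix (Fin 3) (Fin 3) ℝ) (hM : Continuous M) : IsClosed (T M) := by
  rw [T_eq]
  exact closed_param M hM _ isClosed_univ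

lemma union_preconnected (M : ℝ → Matrix (Fin 3) (Fin 3) ℝ) (hM : Continuous M)
    (hs : ∀ s, (M s).IsSymm) (a b : ℝ) (hT : Icc a b ⊆ T M) :
    IsPreconnected {x | ∃ s ∈ Icc a b, x ∈ pos (M s)} := by
  rw [isPreconnected_closed_iff]
  rintro t t' ht ht' hcov ⟨x, ⟨s, hs1, hx⟩, hxt⟩ ⟨x', ⟨s', hs1', hx'⟩, hxt'⟩
  obtain ⟨r, hr, hr1, hr2⟩ := isPreconnected_closed_iff.1 (isPreconnected_Icc (a := a) (b := b))
    _ _ (closed_param M hM t ht) (closed_param M hM t' ht') (by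
      intro r hr
      obtain ⟨v, hv, h⟩ := hT hr
      rcases hcov ⟨r, hr, v, hv, rfl, h⟩ with h1 | h1
      · exact Or.inl ⟨_, ⟨v, hv, rfl, h⟩, h1⟩
      · exact Or.inr ⟨_, ⟨v, hv, rfl, h⟩, h1⟩) ⟨s, hs1, x, hx, hxt⟩ ⟨s', hs1', x', hx', hxt'⟩
  obtain ⟨y, hy, hyt⟩ := isPreconnected_closed_iff.1 (pos_preconnected (M r) (hs r)) t t' ht ht'
    (fun y hy => hcov ⟨r, hr, hy⟩) hr1 hr2
  exact ⟨y, ⟨r, hr, hy⟩, hyt⟩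

lemma det_neg_of_notMem {M : ℝ → Matrix (Fin 3) (Fin 3) ℝ} (hs : ∀ s, (M s).IsSymm) {s : ℝ}
    (h : s ∉ T M) : (M s).det < 0 := by
  have hpd : (-(M s)).PosDef := by
    refine Matrix.PosDef.of_dotProduct_mulVec_pos ?_ ?_
    · rw [Matrix.IsHermitian, conjTranspose_eq_transpose_of_trivial, transpose_neg, (hs s).eq]
    · intro x hx
      have : ¬ 0 ≤ x ⬝ᵥ (M s *ᵥ x) := fun h0 => h ⟨x, hx, h0⟩
      rw [star_trivial, neg_mulVec, dotProduct_neg]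
      linarith
  have := hpd.det_pos
  rw [det_neg] at this
  simp at this
  linarith

lemma det_zero_of_limit {M : ℝ → Matrix (Fin 3) (Fin 3) ℝ} (hM : Continuous M)
    (hs : ∀ s, (M s).IsSymm) {s : ℝ}
    (h : s ∈ T M) (hf : ∃ᶠ r in 𝓝 s, r ∉ T M) : (M s).det = 0 := by
  obtain ⟨v, hv, hq⟩ := h
  have hle : ∀ x, x ⬝ᵥ (M s *ᵥ x) ≤ 0 := by
    intro x
    by_contra! hx
    have hx0 : x ≠ 0 := by
      rintro rfl
      simp at hx
    have hc : Continuous (fun r => x ⬝ᵥ (M r *ᵥ x)) := continuous_quad hM continuous_const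
    have hev : ∀ᶠ r in 𝓝 s, 0 < x ⬝ᵥ (M r *ᵥ x) := hc.continuousAt.eventually (lt_mem_nhds hx)
    obtain ⟨r, hr1, hr2⟩ := (hf.and_eventually hev).exists
    exact hr1 ⟨x, hx0, hr2.le⟩
  have hpd : (-(M s)).PosSemidef := by
    refine Matrix.PosSemidef.of_dotProduct_mulVec_nonneg ?_ ?_
    · rw [Matrix.IsHermitian, conjTranspose_eq_transpose_of_trivial, transpose_neg, (hs s).eq]
    · intro x
      rw [star_trivial, neg_mulVec, dotProduct_neg]
      linarith [hle x]
  have h0 : (-(M s)) *ᵥ v = 0 := by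
    rw [← hpd.dotProduct_mulVec_zero_iff, star_trivial, neg_mulVec, dotProduct_neg]
    linarith [hle v]
  rw [neg_mulVec, neg_eq_zero] at h0
  exact Matrix.exists_mulVec_eq_zero_iff.1 ⟨v, hv, h0⟩

lemma gap_left {T : Set ℝ} (hT : IsClosed T) {l s : ℝ} (hls : l < s) (hl : l ∉ T) (hs : s ∈ T) :
    ∃ m, l < m ∧ m ≤ s ∧ Icc m s ⊆ T ∧ ∃ᶠ x in 𝓝[<] m, x ∉ T := by
  have hne : {n | n ≤ s ∧ n ∉ T}.Nonempty := ⟨l, hls.le, hl⟩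
  have hbd : BddAbove {n | n ≤ s ∧ n ∉ T} := ⟨s, fun n hn => hn.1⟩
  have hlub := isLUB_csSup hne hbd
  set m := sSup {n | n ≤ s ∧ n ∉ T} with hm
  have hms : m ≤ s := hlub.2 fun n hn => hn.1
  have hIoc : Ioc m s ⊆ T := by
    intro x hx
    by_contra hxT
    exact absurd (hlub.1 ⟨hx.2, hxT⟩) (not_le.2 hx.1)
  have hmT : m ∈ T := by
    rcases hms.eq_or_lt with h | h
    · rw [h]; exact hs
    · have : m ∈ closure (Ioc m s) := by
        rw [closure_Ioc h.ne]; exact left_mem_Icc.2 hms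
      exact hT.closure_subset_iff.2 hIoc this
  have hlm : l < m := lt_of_le_of_ne (hlub.1 ⟨hls.le, hl⟩) (by rintro h; exact hl (h ▸ hmT))
  refine ⟨m, hlm, hms, ?_, ?_⟩
  · intro x hx
    rcases hx.1.eq_or_lt with h | h
    · exact h ▸ hmT
    · exact hIoc ⟨h, hx.2⟩
  · have h1 := hlub.frequently_mem hne
    rw [frequently_nhdsWithin_iff] at h1 ⊢
    refine h1.mono fun x hx => ⟨hx.1.2, Set.mem_Iio.2 (lt_of_le_of_ne (Set.mem_Iic.1 hx.2) ?_)⟩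
    rintro rfl
    exact hx.1.2 hmT

lemma gap_right {T : Set ℝ} (hT : IsClosed T) {s r : ℝ} (hsr : s < r) (hr : r ∉ T) (hs : s ∈ T) :
    ∃ m, m < r ∧ s ≤ m ∧ Icc s m ⊆ T ∧ ∃ᶠ x in 𝓝[>] m, x ∉ T := by
  have hne : {n | s ≤ n ∧ n ∉ T}.Nonempty := ⟨r, hsr.le, hr⟩
  have hbd : BddBelow {n | s ≤ n ∧ n ∉ T} := ⟨s, fun n hn => hn.1⟩
  have hglb := isGLB_csInf hne hbd
  set m := sInf {n | s ≤ n ∧ n ∉ T} with hm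
  have hms : s ≤ m := hglb.2 fun n hn => hn.1
  have hIco : Ico s m ⊆ T := by
    intro x hx
    by_contra hxT
    exact absurd (hglb.1 ⟨hx.1, hxT⟩) (not_le.2 hx.2)
  have hmT : m ∈ T := by
    rcases hms.eq_or_lt with h | h
    · rw [← h]; exact hs
    · have : m ∈ closure (Ico s m) := by
        rw [closure_Ico h.ne]; exact right_mem_Icc.2 hms
      exact hT.closure_subset_iff.2 hIco this
  have hlm : m < r := lt_of_le_of_ne (hglb.1 ⟨hsr.le, hr⟩) (by rintro h; exact hr (h ▸ hmT))
  refine ⟨m, hlm, hms, ?_, ?_⟩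
  · intro x hx
    rcases hx.2.eq_or_lt with h | h
    · exact h ▸ hmT
    · exact hIco ⟨hx.1, h⟩
  · have h1 := hglb.frequently_mem hne
    rw [frequently_nhdsWithin_iff] at h1 ⊢
    refine h1.mono fun x hx => ⟨hx.1.2, Set.mem_Ioi.2 (lt_of_le_of_ne (Set.mem_Ici.1 hx.2) ?_)⟩
    intro h
    exact hx.1.2 (h ▸ hmT)

end QuarticAux

namespace QuarticAux

open Set Filter Topology Matrix

/-- The linear coefficient of the determinant expansion. -/
def lin {R : Type*} [CommRing R] (A B : Matrix (Fin 3) (Fin 3) R) : R := 2 * (A.adjugate * B).trace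

/-- The remainder of the determinant expansion. -/
def rem {R : Type*} [CommRing R] (u w : R) (A B C : Matrix (Fin 3) (Fin 3) R) : R :=
  u ^ 4 * (A.adjugate * C).trace + u ^ 2 * (A * ((2 * u) • B + w • C).adjugate).trace
    + w * ((2 * u) • B + w • C).det

lemma det_expand {R : Type*} [CommRing R] (u w : R) (A B C : Matrix (Fin 3) (Fin 3) R) :
    (u ^ 2 • A + (2 * u * w) • B + w ^ 2 • C).det =
      u ^ 6 * A.det + u ^ 5 * w * lin A B + w * w * rem u w A B C := by
  have key : ∀ (X Y : Matrix (Fin 3) (Fin 3) R), (X + w • Y).det =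
      X.det + w * (X.adjugate * Y).trace + w ^ 2 * (X * Y.adjugate).trace + w ^ 3 * Y.det := by
    intro X Y
    simp only [Matrix.adjugate_fin_three, Matrix.trace_fin_three, Matrix.det_fin_three,
      Matrix.mul_apply, Fin.sum_univ_three, Matrix.add_apply, Matrix.smul_apply, smul_eq_mul,
      Matrix.of_apply, Matrix.cons_val]
    ring
  have h1 : u ^ 2 • A + (2 * u * w) • B + w ^ 2 • C = u ^ 2 • A + w • ((2 * u) • B + w • C) := by
    rw [smul_add, smul_smul, smul_smul, add_assoc]
    congr 3 <;> ring
  rw [h1, key]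
  have h2 : (u ^ 2 • A).adjugate = u ^ 4 • A.adjugate := by
    rw [Matrix.adjugate_smul]
    congr 1
    simp only [Fintype.card_fin]
    ring
  have h3 : (u ^ 2 • A).det = u ^ 6 * A.det := by
    rw [Matrix.det_smul]
    simp only [Fintype.card_fin]
    ring
  rw [h2, h3, lin, rem]
  simp only [Matrix.smul_mul, Matrix.mul_add, Matrix.mul_smul, Matrix.trace_add, Matrix.trace_smul,
    smul_eq_mul]
  ring

lemma lin_map {R R' : Type*} [CommRing R] [CommRing R'] (g : R →+* R')
    (A B : Matrix (Fin 3) (Fin 3) R) : lin (A.map g) (B.map g) = g (lin A B) := by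
  unfold lin
  rw [map_mul, map_ofNat]
  congr 1
  simp only [Matrix.adjugate_fin_three, Matrix.trace_fin_three,
      Matrix.mul_apply, Fin.sum_univ_three, Matrix.map_apply,
      Matrix.of_apply, Matrix.cons_val, map_add, map_mul, map_sub, map_neg]

/-- The quadratic family of matrices at `(a, b)`. -/
def Mt (M₁ M₂ M₃ : Matrix (Fin 3) (Fin 3) ℝ) (a b : ℝ) : Matrix (Fin 3) (Fin 3) ℝ :=
  a ^ 2 • M₁ + (2 * a * b) • M₂ + b ^ 2 • M₃

/-- The polarization of the quadratic family. -/
def Mp (M₁ M₂ M₃ : Matrix (Fin 3) (Fin 3) ℝ) (a b c d : ℝ) : Matrix (Fin 3) (Fin 3) ℝ :=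
  (a * c) • M₁ + (a * d + b * c) • M₂ + (b * d) • M₃

lemma Mt_comb (M₁ M₂ M₃ : Matrix (Fin 3) (Fin 3) ℝ) (a b c d u w : ℝ) :
    Mt M₁ M₂ M₃ (u * a + w * c) (u * b + w * d) =
      u ^ 2 • Mt M₁ M₂ M₃ a b + (2 * u * w) • Mp M₁ M₂ M₃ a b c d + w ^ 2 • Mt M₁ M₂ M₃ c d := by
  ext i j
  simp only [Mt, Mp, Matrix.add_apply, Matrix.smul_apply, smul_eq_mul]
  ring

lemma mat_entry {R : Type*} [CommRing R] (g : ℝ →+* R) (M₁ M₂ M₃ : Matrix (Fin 3) (Fin 3) ℝ)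
    (a b c d : ℝ) (u0 u1 x0 x1 : R) (h0 : x0 = u0 * g a + u1 * g c)
    (h1 : x1 = u0 * g b + u1 * g d) (i j : Fin 3) :
    x0 ^ 2 * g (M₁ i j) + 2 * x0 * x1 * g (M₂ i j) + x1 ^ 2 * g (M₃ i j) =
    (u0 ^ 2 • (Mt M₁ M₂ M₃ a b).map g
        + (2 * u0 * u1) • (Mp M₁ M₂ M₃ a b c d).map g
        + u1 ^ 2 • (Mt M₁ M₂ M₃ c d).map g) i j := by
  simp only [Mt, Mp, Matrix.add_apply, Matrix.smul_apply, smul_eq_mul, Matrix.map_apply,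
    map_add, map_mul, map_pow, map_ofNat]
  rw [h0, h1]
  ring

lemma sq_dvd_det {R : Type*} [CommRing R] (g : ℝ →+* R) (A B C : Matrix (Fin 3) (Fin 3) ℝ)
    (u0 u1 : R) (h0 : A.det = 0) (h1 : lin A B = 0) :
    u1 * u1 ∣ (u0 ^ 2 • A.map g + (2 * u0 * u1) • B.map g + u1 ^ 2 • C.map g).det := by
  rw [det_expand, lin_map, h1]
  have : (A.map g).det = 0 := by
    have h2 := RingHom.map_det g A
    rw [h0, map_zero] at h2
    exact h2.symm
  rw [this, map_zero, mul_zero, mul_zero, zero_add, zero_add]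
  exact Dvd.intro _ rfl

lemma coord_exists {R : Type*} [CommRing R] (a b c d x y : R) (h : a * d - b * c = 1) :
    ∃ u0 u1 : R, x = u0 * a + u1 * c ∧ y = u0 * b + u1 * d ∧ u1 = - b * x + a * y := by
  refine ⟨d * x - c * y, - b * x + a * y, ?_, ?_, rfl⟩
  · linear_combination -x * h
  · linear_combination -y * h

lemma sq_dvd_of_entries {R : Type*} [CommRing R] (g : ℝ →+* R)
    (M₁ M₂ M₃ : Matrix (Fin 3) (Fin 3) ℝ) (a b c d : ℝ) (hdet : a * d - b * c = 1)
    (h0 : (Mt M₁ M₂ M₃ a b).det = 0) (h1 : lin (Mt M₁ M₂ M₃ a b) (Mp M₁ M₂ M₃ a b c d) = 0)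
    (x y : R) : (- g b * x + g a * y) * (- g b * x + g a * y) ∣
      (Matrix.of fun i j => x ^ 2 * g (M₁ i j) + 2 * x * y * g (M₂ i j)
        + y ^ 2 * g (M₃ i j) : Matrix (Fin 3) (Fin 3) R).det := by
  have hgd : g a * g d - g b * g c = 1 := by
    rw [← map_mul, ← map_mul, ← map_sub, hdet, map_one]
  obtain ⟨u0, u1, hX0, hX1, hu1⟩ := coord_exists (g a) (g b) (g c) (g d) x y hgd
  have hmat : (Matrix.of fun i j => x ^ 2 * g (M₁ i j) + 2 * x * y * g (M₂ i j)
        + y ^ 2 * g (M₃ i j) : Matrix (Fin 3) (Fin 3) R) = (u0 ^ 2 • (Mt M₁ M₂ M₃ a b).map g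
        + (2 * u0 * u1) • (Mp M₁ M₂ M₃ a b c d).map g + u1 ^ 2 • (Mt M₁ M₂ M₃ c d).map g) := by
    ext1 i j
    rw [Matrix.of_apply]
    exact mat_entry g M₁ M₂ M₃ a b c d u0 u1 _ _ hX0 hX1 i j
  rw [hmat, ← hu1]
  exact sq_dvd_det g _ _ _ u0 u1 h0 h1

set_option maxHeartbeats 1000000 in
lemma not_double_root (M₁ M₂ M₃ : Matrix (Fin 3) (Fin 3) ℝ)
    (hsf : Squarefree (binarySextic M₁ M₂ M₃)) (a b c d : ℝ) (hdet : a * d - b * c = 1)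
    (h0 : (Mt M₁ M₂ M₃ a b).det = 0) (h1 : lin (Mt M₁ M₂ M₃ a b) (Mp M₁ M₂ M₃ a b c d) = 0) :
    False := by
  have hdvd := sq_dvd_of_entries ((MvPolynomial.C : ℂ →+* MvPolynomial (Fin 2) ℂ).comp
    Complex.ofRealHom) M₁ M₂ M₃ a b c d hdet h0 h1
    (MvPolynomial.X 0) (MvPolynomial.X 1)
  have hunit := hsf _ hdvd
  have h3 := hunit.map (MvPolynomial.eval (fun i : Fin 2 => if i = 0 then (a : ℂ) else (b : ℂ)))
  rw [map_add, map_mul, map_mul, map_neg, RingHom.comp_apply, RingHom.comp_apply,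
      MvPolynomial.eval_C,
      MvPolynomial.eval_C, MvPolynomial.eval_X, MvPolynomial.eval_X, if_pos rfl,
      if_neg (by decide)] at h3
  have h4 : -(Complex.ofRealHom b) * (a : ℂ) + (Complex.ofRealHom a) * (b : ℂ) = 0 := by
    simp only [Complex.ofRealHom_eq_coe]
    ring
  rw [h4] at h3
  exact not_isUnit_zero h3

/-- The family of matrices parametrized by the angle. -/
noncomputable def Mang (M₁ M₂ M₃ : Matrix (Fin 3) (Fin 3) ℝ) (φ : ℝ) : Matrix (Fin 3) (Fin 3) ℝ :=
  Mt M₁ M₂ M₃ (Real.cos φ) (Real.sin φ)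

lemma Mang_cont (M₁ M₂ M₃ : Matrix (Fin 3) (Fin 3) ℝ) : Continuous (Mang M₁ M₂ M₃) := by
  unfold Mang Mt
  fun_prop

lemma Mang_add (M₁ M₂ M₃ : Matrix (Fin 3) (Fin 3) ℝ) (φ τ : ℝ) :
    Mang M₁ M₂ M₃ (φ + τ) = (Real.cos τ) ^ 2 • Mang M₁ M₂ M₃ φ
      + (2 * Real.cos τ * Real.sin τ) • Mp M₁ M₂ M₃ (Real.cos φ) (Real.sin φ) (-Real.sin φ) (Real.cos φ)
      + (Real.sin τ) ^ 2 • Mt M₁ M₂ M₃ (-Real.sin φ) (Real.cos φ) := by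
  unfold Mang
  rw [← Mt_comb, Real.cos_add, Real.sin_add]
  congr 1 <;> ring

lemma Mang_add_pi (M₁ M₂ M₃ : Matrix (Fin 3) (Fin 3) ℝ) (φ : ℝ) :
    Mang M₁ M₂ M₃ (φ + Real.pi) = Mang M₁ M₂ M₃ φ := by
  rw [Mang_add]
  simp

lemma sign_change (M₁ M₂ M₃ : Matrix (Fin 3) (Fin 3) ℝ)
    (hsf : Squarefree (binarySextic M₁ M₂ M₃)) (φ : ℝ) (h0 : (Mang M₁ M₂ M₃ φ).det = 0)
    (hr : ∃ᶠ x in 𝓝[>] φ, (Mang M₁ M₂ M₃ x).det ≤ 0)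
    (hl : ∃ᶠ x in 𝓝[<] φ, (Mang M₁ M₂ M₃ x).det ≤ 0) : False := by
  refine not_double_root M₁ M₂ M₃ hsf (Real.cos φ) (Real.sin φ) (-Real.sin φ) (Real.cos φ) ?_ h0 ?_
  · have := Real.sin_sq_add_cos_sq φ
    nlinarith
  set A := Mang M₁ M₂ M₃ φ with hA
  set B := Mp M₁ M₂ M₃ (Real.cos φ) (Real.sin φ) (-Real.sin φ) (Real.cos φ) with hB
  set C := Mt M₁ M₂ M₃ (-Real.sin φ) (Real.cos φ) with hC
  change lin A B = 0
  let G : ℝ → ℝ := fun x => Real.cos (x - φ) ^ 5 * lin A B +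
    Real.sin (x - φ) * rem (Real.cos (x - φ)) (Real.sin (x - φ)) A B C
  have hG : Continuous G := by
    have hE : Continuous (fun x : ℝ => (2 * Real.cos (x - φ)) • B + Real.sin (x - φ) • C) := by
      fun_prop
    have h1 : Continuous (fun x : ℝ =>
        (A * ((2 * Real.cos (x - φ)) • B + Real.sin (x - φ) • C).adjugate).trace) :=
      (continuous_const.matrix_mul hE.matrix_adjugate).matrix_trace
    have h2 : Continuous (fun x : ℝ => ((2 * Real.cos (x - φ)) • B + Real.sin (x - φ) • C).det) :=
      hE.matrix_det
    simp only [G, rem]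
    fun_prop
  have hGφ : G φ = lin A B := by simp [G]
  have hdet : ∀ x, (Mang M₁ M₂ M₃ x).det = Real.sin (x - φ) * G x := by
    intro x
    have h1 : x = φ + (x - φ) := by ring
    conv_lhs => rw [h1, Mang_add, det_expand, ← hA, ← hB, h0]
    simp only [G]
    ring
  rcases lt_trichotomy (lin A B) 0 with hneg | hzero | hpos
  · exfalso
    have e1 : ∀ᶠ x in 𝓝[<] φ, G x < 0 :=
      (hG.continuousAt.eventually (gt_mem_nhds (by rw [hGφ]; exact hneg))).filter_mono
        nhdsWithin_le_nhds
    have e2 : ∀ᶠ x in 𝓝[<] φ, x ∈ Ioo (φ - Real.pi) φ :=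
      Ioo_mem_nhdsLT (by linarith [Real.pi_pos])
    obtain ⟨x, hx1, hx2, hx3⟩ := (hl.and_eventually (e1.and e2)).exists
    rw [hdet] at hx1
    have : Real.sin (x - φ) < 0 :=
      Real.sin_neg_of_neg_of_neg_pi_lt (by linarith [hx3.2]) (by linarith [hx3.1])
    linarith [mul_pos_of_neg_of_neg this hx2]
  · exact hzero
  · exfalso
    have e1 : ∀ᶠ x in 𝓝[>] φ, 0 < G x :=
      (hG.continuousAt.eventually (lt_mem_nhds (by rw [hGφ]; exact hpos))).filter_mono
        nhdsWithin_le_nhds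
    have e2 : ∀ᶠ x in 𝓝[>] φ, x ∈ Ioo φ (φ + Real.pi) :=
      Ioo_mem_nhdsGT (by linarith [Real.pi_pos])
    obtain ⟨x, hx1, hx2, hx3⟩ := (hr.and_eventually (e1.and e2)).exists
    rw [hdet] at hx1
    have : 0 < Real.sin (x - φ) :=
      Real.sin_pos_of_pos_of_lt_pi (by linarith [hx3.1]) (by linarith [hx3.2])
    linarith [mul_pos this hx2]

lemma exists_poly (A B C : Matrix (Fin 3) (Fin 3) ℝ) : ∃ p : Polynomial ℝ, p.natDegree ≤ 6 ∧
    ∀ s, p.eval s = (s ^ 2 • A + (2 * s) • B + C).det := by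
  let E : Matrix (Fin 3) (Fin 3) (Polynomial ℝ) := Matrix.of fun i j =>
    Polynomial.C (A i j) * Polynomial.X ^ 2 + Polynomial.C (2 * B i j) * Polynomial.X
      + Polynomial.C (C i j)
  have hE : ∀ i j, (E i j).natDegree ≤ 2 := fun i j => by
    simp only [E, Matrix.of_apply]
    exact Polynomial.natDegree_quadratic_le
  have hprod : ∀ i j k l m n, (E i j * E k l * E m n).natDegree ≤ 6 := fun i j k l m n => by
    refine Polynomial.natDegree_mul_le.trans ?_
    have h1 := Polynomial.natDegree_mul_le (p := E i j) (q := E k l)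
    have h2 := hE i j
    have h3 := hE k l
    have h4 := hE m n
    omega
  refine ⟨E.det, ?_, fun s => ?_⟩
  · rw [Matrix.det_fin_three]
    have hsub : ∀ p q : Polynomial ℝ, p.natDegree ≤ 6 → q.natDegree ≤ 6 →
        (p - q).natDegree ≤ 6 :=
      fun p q hp hq => (Polynomial.natDegree_sub_le p q).trans (max_le hp hq)
    have hadd : ∀ p q : Polynomial ℝ, p.natDegree ≤ 6 → q.natDegree ≤ 6 →
        (p + q).natDegree ≤ 6 :=
      fun p q hp hq => (Polynomial.natDegree_add_le p q).trans (max_le hp hq)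
    refine hsub _ _ ?_ (hprod _ _ _ _ _ _)
    refine hadd _ _ ?_ (hprod _ _ _ _ _ _)
    refine hadd _ _ ?_ (hprod _ _ _ _ _ _)
    exact hsub _ _ (hsub _ _ (hprod _ _ _ _ _ _) (hprod _ _ _ _ _ _)) (hprod _ _ _ _ _ _)
  · simp only [Matrix.det_fin_three, E, Matrix.of_apply, Polynomial.eval_add, Polynomial.eval_sub,
      Polynomial.eval_mul, Polynomial.eval_C, Polynomial.eval_X, Polynomial.eval_pow,
      Matrix.add_apply, Matrix.smul_apply, smul_eq_mul]
    ring

lemma exists_root_poly (M₁ M₂ M₃ : Matrix (Fin 3) (Fin 3) ℝ) (φ₀ : ℝ) :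
    ∃ p : Polynomial ℝ, p.natDegree ≤ 6 ∧ ∀ τ, Real.sin τ ≠ 0 →
      (Mang M₁ M₂ M₃ (φ₀ + τ)).det = Real.sin τ ^ 6 * p.eval (Real.cos τ / Real.sin τ) := by
  obtain ⟨p, hp, hp'⟩ := exists_poly (Mang M₁ M₂ M₃ φ₀)
    (Mp M₁ M₂ M₃ (Real.cos φ₀) (Real.sin φ₀) (-Real.sin φ₀) (Real.cos φ₀))
    (Mt M₁ M₂ M₃ (-Real.sin φ₀) (Real.cos φ₀))
  refine ⟨p, hp, fun τ hτ => ?_⟩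
  rw [hp', Mang_add]
  have : ∀ N : Matrix (Fin 3) (Fin 3) ℝ, Real.sin τ ^ 6 * N.det = ((Real.sin τ) ^ 2 • N).det := by
    intro N
    rw [Matrix.det_smul]
    simp only [Fintype.card_fin]
    ring
  rw [this, smul_add, smul_add, smul_smul, smul_smul]
  congr 4
  · field_simp
  · field_simp

end QuarticAux

namespace QuarticAux

open Set Filter Topology

lemma quartic_factor (c0 c1 c2 c3 k : ℝ) (hk : k < 0) (h : ℝ → ℝ)
    (hh : ∀ u, h u = c0 + c1 * u + c2 * u ^ 2 + c3 * u ^ 3 + k * u ^ 4)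
    {l r1 p r2 l' : ℝ} (hl : l < r1) (h1 : r1 < p) (h2 : p < r2) (hl' : r2 < l')
    (e0 : h l ≤ 0) (e1 : 0 < h r1) (e2 : h p ≤ 0) (e3 : 0 < h r2) (e4 : h l' ≤ 0) :
    ∃ α a b β, α < a ∧ a ≤ b ∧ b < β ∧ a ≤ p ∧ p ≤ b ∧
      ∀ u, h u = k * ((u - α) * (u - a) * (u - b) * (u - β)) := by
  have hcont : Continuous h := by
    have : h = fun u => c0 + c1 * u + c2 * u ^ 2 + c3 * u ^ 3 + k * u ^ 4 := funext hh
    rw [this]; fun_prop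
  obtain ⟨α, ⟨hα1, hα2⟩, hα⟩ : (0 : ℝ) ∈ h '' Icc l r1 :=
    intermediate_value_Icc hl.le hcont.continuousOn ⟨e0, e1.le⟩
  obtain ⟨β, ⟨hβ1, hβ2⟩, hβ⟩ : (0 : ℝ) ∈ h '' Icc r2 l' :=
    intermediate_value_Icc' hl'.le hcont.continuousOn ⟨e4, e3.le⟩
  have hαr : α < r1 := lt_of_le_of_ne hα2 (by rintro rfl; linarith)
  have hβr : r2 < β := lt_of_le_of_ne hβ1 (by rintro rfl; linarith)
  set m := c3 + k * α + k * β with hm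
  set n := c2 + (c3 + k * α) * α + (c3 + k * α + k * β) * β with hn
  have hg : c1 + (c2 + (c3 + k * α) * α) * α + (c2 + (c3 + k * α) * α) * β + (c3 + k * α) * β ^ 2
      + k * β ^ 3 = 0 := by
    have hne : β - α ≠ 0 := by
      have : α < β := by linarith
      exact sub_ne_zero.2 this.ne'
    apply mul_left_cancel₀ hne
    rw [hh] at hα hβ
    linear_combination hβ - hα
  have hfac : ∀ u, h u = (u - α) * (u - β) * (k * u ^ 2 + m * u + n) := by
    intro u
    rw [hh] at hα ⊢
    rw [hm, hn]
    linear_combination hα + (u - α) * hg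
  have qp : 0 ≤ k * p ^ 2 + m * p + n := by
    rw [hfac] at e2
    by_contra! hneg
    have : (p - α) * (p - β) < 0 := mul_neg_of_pos_of_neg (by linarith) (by linarith)
    linarith [mul_pos_of_neg_of_neg this hneg]
  have q1 : k * r1 ^ 2 + m * r1 + n < 0 := by
    rw [hfac] at e1
    by_contra! hneg
    have : (r1 - α) * (r1 - β) < 0 := mul_neg_of_pos_of_neg (by linarith) (by linarith)
    linarith [mul_nonpos_of_nonpos_of_nonneg this.le hneg]
  have q2 : k * r2 ^ 2 + m * r2 + n < 0 := by
    rw [hfac] at e3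
    by_contra! hneg
    have : (r2 - α) * (r2 - β) < 0 := mul_neg_of_pos_of_neg (by linarith) (by linarith)
    linarith [mul_nonpos_of_nonpos_of_nonneg this.le hneg]
  have hD : 0 ≤ m ^ 2 - 4 * k * n := by
    have h4 : 4 * k * (k * p ^ 2 + m * p + n) = (2 * k * p + m) ^ 2 - (m ^ 2 - 4 * k * n) := by ring
    have h5 : 4 * k * (k * p ^ 2 + m * p + n) ≤ 0 :=
      mul_nonpos_of_nonpos_of_nonneg (by linarith) qp
    nlinarith [sq_nonneg (2 * k * p + m)]
  obtain ⟨d, hd0, hd⟩ : ∃ d : ℝ, 0 ≤ d ∧ d ^ 2 = m ^ 2 - 4 * k * n :=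
    ⟨_, Real.sqrt_nonneg _, Real.sq_sqrt hD⟩
  obtain ⟨a, b, hab, hq⟩ : ∃ a b : ℝ, a ≤ b ∧
      ∀ u, k * u ^ 2 + m * u + n = k * ((u - a) * (u - b)) := by
    refine ⟨(-m + d) / (2 * k), (-m - d) / (2 * k), ?_, ?_⟩
    · rw [div_le_div_right_of_neg (by linarith)]; linarith
    · intro u
      have hk' := hk.ne
      field_simp
      linear_combination hd
  rw [hq] at qp q1 q2
  have hp : (p - a) * (p - b) ≤ 0 := by
    by_contra! hc
    linarith [mul_neg_of_neg_of_pos hk hc]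
  have hr1 : 0 < (r1 - a) * (r1 - b) := by
    by_contra! hc
    linarith [mul_nonneg_of_nonpos_of_nonpos hk.le hc]
  have hr2 : 0 < (r2 - a) * (r2 - b) := by
    by_contra! hc
    linarith [mul_nonneg_of_nonpos_of_nonpos hk.le hc]
  have hap : a ≤ p := by
    by_contra! hc
    linarith [mul_pos_of_neg_of_neg (sub_neg.2 hc) (sub_neg.2 (hc.trans_le hab))]
  have hpb : p ≤ b := by
    by_contra! hc
    linarith [mul_pos (sub_pos.2 hc) (sub_pos.2 (lt_of_le_of_lt hab hc))]
  refine ⟨α, a, b, β, ?_, hab, ?_, hap, hpb, ?_⟩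
  · by_contra! hc
    linarith [mul_nonpos_of_nonneg_of_nonpos (show 0 ≤ r1 - a by linarith)
      (show r1 - b ≤ 0 by linarith)]
  · by_contra! hc
    linarith [mul_nonpos_of_nonneg_of_nonpos (show 0 ≤ r2 - a by linarith)
      (show r2 - b ≤ 0 by linarith)]
  · intro u
    rw [hfac, hq]; ring

/-- The data for projecting a connected component from a point of another one. -/
structure Setup where
  f : (Fin 3 → ℝ) → ℝ
  fc : Continuous f
  hom : ∀ (c : ℝ) v, f (c • v) = c ^ 4 * f v
  quart : ∀ d z, ∃ c0 c1 c2 c3 : ℝ, ∀ u : ℝ,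
    f (d + u • z) = c0 + c1 * u + c2 * u ^ 2 + c3 * u ^ 3 + f z * u ^ 4
  z : Fin 3 → ℝ
  e : Fin 3 → ℝ
  e' : Fin 3 → ℝ
  hz : f z < 0
  span : ∀ v, ∃ a b c : ℝ, v = a • e + b • e' + c • z
  indep : ∀ a b c : ℝ, a • e + b • e' + c • z = 0 → a = 0 ∧ b = 0 ∧ c = 0
  C : Set (RP 3)
  closed : IsClosed C
  preconn : IsPreconnected C
  CS : ∀ v h, pt v h ∈ C → f v ≤ 0
  ext : ∀ A : Set (RP 3), IsPreconnected A → (∀ v h, pt v h ∈ A → f v ≤ 0) →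
    (A ∩ C).Nonempty → A ⊆ C
  zC : ∀ h, pt z h ∉ C

namespace Setup

variable (D : Setup)

/-- The vector over the chart point `(θ, u)`. -/
noncomputable def vec (x : ℝ × ℝ) : Fin 3 → ℝ :=
  (Real.cos x.1 • D.e + Real.sin x.1 • D.e') + x.2 • D.z

lemma vec_ne (x : ℝ × ℝ) : D.vec x ≠ 0 := by
  intro h
  obtain ⟨h1, h2, _⟩ := D.indep _ _ _ h
  have := Real.sin_sq_add_cos_sq x.1
  rw [h1, h2] at this
  norm_num at this

lemma continuous_vec : Continuous D.vec := by
  unfold vec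
  fun_prop

/-- The chart. -/
noncomputable def psi (x : ℝ × ℝ) : RP 3 := pt (D.vec x) (D.vec_ne x)

lemma continuous_psi : Continuous D.psi := continuous_pt D.continuous_vec _

/-- The function in the chart. -/
noncomputable def F (x : ℝ × ℝ) : ℝ := D.f (D.vec x)

lemma continuous_F : Continuous D.F := D.fc.comp D.continuous_vec

lemma F_zero_of_pt_eq {v w : Fin 3 → ℝ} {hv : v ≠ 0} {hw : w ≠ 0} (h : pt v hv = pt w hw) :
    ∃ c : ℝ, 0 < c ∧ D.f w = c * D.f v := by
  obtain ⟨c, hc, rfl⟩ := smul_of_pt_eq h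
  exact ⟨c ^ 4, by positivity, D.hom c v⟩

lemma vec_add_pi (θ u : ℝ) : D.vec (θ + Real.pi, -u) = (-1 : ℝ) • D.vec (θ, u) := by
  simp only [vec, Real.cos_add_pi, Real.sin_add_pi, smul_add, smul_smul, neg_one_mul]

lemma psi_add_pi (θ u : ℝ) : D.psi (θ + Real.pi, -u) = D.psi (θ, u) :=
  (pt_eq_of_smul _ _ (-1) (by norm_num) (D.vec_add_pi θ u).symm).symm

lemma psi_surj {x : RP 3} (hx : x ∈ D.C) : ∃ θ ∈ Icc (-Real.pi) Real.pi, ∃ u, x = D.psi (θ, u) := by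
  obtain ⟨v, hv, rfl⟩ := exists_pt x
  obtain ⟨a, b, c, habc⟩ := D.span v
  set w : ℂ := ⟨a, b⟩ with hw
  by_cases hw0 : w = 0
  · exfalso
    have ha : a = 0 := by simpa [hw] using congrArg Complex.re hw0
    have hb : b = 0 := by simpa [hw] using congrArg Complex.im hw0
    rw [ha, hb] at habc
    simp only [zero_smul, zero_add] at habc
    have hc : c ≠ 0 := by
      rintro rfl
      simp at habc
      exact hv habc
    have hz : D.z ≠ 0 := by
      rintro h
      rw [h, smul_zero] at habc
      exact hv habc
    have := pt_eq_of_smul hz hv c hc habc.symm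
    exact D.zC hz (this ▸ hx)
  · have hn : 0 < ‖w‖ := norm_pos_iff.2 hw0
    refine ⟨Complex.arg w, ⟨(Complex.neg_pi_lt_arg w).le, Complex.arg_le_pi w⟩, c / ‖w‖, ?_⟩
    refine (pt_eq_of_smul _ _ ‖w‖ hn.ne' ?_).symm
    have h1 : ‖w‖ * Real.cos (Complex.arg w) = a := Complex.norm_mul_cos_arg w
    have h2 : ‖w‖ * Real.sin (Complex.arg w) = b := Complex.norm_mul_sin_arg w
    simp only [vec, smul_add, smul_smul, h1, h2]
    rw [mul_div_cancel₀ _ hn.ne', habc]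

lemma psi_line {θ w θ' w' : ℝ} (h : D.psi (θ, w) = D.psi (θ', w')) (u' : ℝ) :
    ∃ u, D.psi (θ', u') = D.psi (θ, u) := by
  obtain ⟨c, hc, hcc⟩ := smul_of_pt_eq h
  simp only [vec] at hcc
  have h0 : (c * Real.cos θ - Real.cos θ') • D.e + (c * Real.sin θ - Real.sin θ') • D.e'
      + (c * w - w') • D.z = 0 := by
    rw [← sub_eq_zero] at hcc
    rw [← hcc]
    module
  obtain ⟨h1, h2, _⟩ := D.indep _ _ _ h0
  refine ⟨u' / c, ?_⟩
  refine (pt_eq_of_smul _ _ c hc ?_).symm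
  simp only [vec, smul_add, smul_smul, mul_div_cancel₀ _ hc]
  rw [sub_eq_zero.1 h1, sub_eq_zero.1 h2]

lemma exists_bound : ∃ R : ℝ, 0 < R ∧ ∀ θ u, R < |u| → D.F (θ, u) < 0 ∧ D.psi (θ, u) ∉ D.C := by
  have hz0 : D.z ≠ 0 := by
    intro h
    have h1 := D.hom 0 D.z
    have h2 := D.hz
    rw [zero_smul] at h1
    rw [h, h1] at h2
    simp at h2
  have hO : IsOpen ((fun P : {v : Fin 3 → ℝ // v ≠ 0} => (Quot.mk (projRel 3) P : RP 3)) ⁻¹' D.Cᶜ) :=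
    D.closed.isOpen_compl.preimage continuous_mk
  have hO' := (isOpen_ne (x := (0 : Fin 3 → ℝ))).isOpenMap_subtype_val _ hO
  have hO2 : IsOpen {v | D.f v < 0} := isOpen_lt D.fc continuous_const
  obtain ⟨ρ, hρ, hball⟩ := Metric.isOpen_iff.1 (hO'.inter hO2) D.z
    ⟨⟨⟨D.z, hz0⟩, D.zC hz0, rfl⟩, D.hz⟩
  refine ⟨(‖D.e‖ + ‖D.e'‖ + 1) / ρ, by positivity, fun θ u hu => ?_⟩
  have hu0 : 0 < |u| := lt_trans (by positivity) hu
  have hune : u ≠ 0 := abs_pos.1 hu0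
  have hmem : u⁻¹ • D.vec (θ, u) ∈ Metric.ball D.z ρ := by
    rw [Metric.mem_ball, dist_eq_norm]
    have : u⁻¹ • D.vec (θ, u) - D.z = u⁻¹ • (Real.cos θ • D.e + Real.sin θ • D.e') := by
      simp only [vec, smul_add, smul_smul, inv_mul_cancel₀ hune, one_smul, add_sub_cancel_right]
    rw [this, norm_smul, norm_inv, Real.norm_eq_abs, inv_mul_lt_iff₀ hu0]
    have h1 : ‖Real.cos θ • D.e + Real.sin θ • D.e'‖ ≤ ‖D.e‖ + ‖D.e'‖ := by
      refine (norm_add_le _ _).trans (add_le_add ?_ ?_)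
      · rw [norm_smul]
        exact mul_le_of_le_one_left (norm_nonneg _) (Real.abs_cos_le_one θ)
      · rw [norm_smul]
        exact mul_le_of_le_one_left (norm_nonneg _) (Real.abs_sin_le_one θ)
    rw [div_lt_iff₀ hρ] at hu
    linarith
  obtain ⟨⟨⟨v, hv⟩, hvC, hvv⟩, hneg⟩ := hball hmem
  simp only at hvv
  constructor
  · have := D.hom u⁻¹ (D.vec (θ, u))
    change D.f _ < 0 at hneg
    rw [this] at hneg
    have h4 : 0 < u⁻¹ ^ 4 := by positivity
    unfold F
    by_contra! hc
    nlinarith [mul_nonneg h4.le hc]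
  · have : D.psi (θ, u) = pt v hv := pt_eq_of_smul _ _ u⁻¹ (inv_ne_zero hune) hvv.symm
    rw [this]
    exact hvC

lemma psi_le {x : ℝ × ℝ} (h : D.psi x ∈ D.C) : D.F x ≤ 0 := D.CS _ _ h

/-- A preconnected set of the chart on which `F ≤ 0` lies in `C` as soon as it meets `C`. -/
lemma psi_ext {A : Set (ℝ × ℝ)} (hA : IsPreconnected A) (hF : ∀ x ∈ A, D.F x ≤ 0) {x y : ℝ × ℝ}
    (hx : x ∈ A) (hy : y ∈ A) (hxC : D.psi x ∈ D.C) : D.psi y ∈ D.C := by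
  refine D.ext (D.psi '' A) (hA.image _ D.continuous_psi.continuousOn) ?_ ⟨_, ⟨x, hx, rfl⟩, hxC⟩
    ⟨y, hy, rfl⟩
  rintro v h ⟨w, hw, hwv⟩
  obtain ⟨c, hc, hc'⟩ := D.F_zero_of_pt_eq hwv
  rw [hc']
  exact mul_nonpos_of_nonneg_of_nonpos hc.le (hF w hw)

lemma psi_ext_col {θ u u' : ℝ} (hF : ∀ w ∈ uIcc u u', D.F (θ, w) ≤ 0)
    (hu : D.psi (θ, u) ∈ D.C) : D.psi (θ, u') ∈ D.C := by
  have hpre : IsPreconnected ((fun w => (θ, w)) '' uIcc u u' : Set (ℝ × ℝ)) :=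
    isPreconnected_uIcc.image _ (by fun_prop)
  refine D.psi_ext hpre ?_ ⟨u, left_mem_uIcc, rfl⟩ ⟨u', right_mem_uIcc, rfl⟩ hu
  rintro _ ⟨w, hw, rfl⟩
  exact hF w hw

lemma column {θ p : ℝ} (hp : D.psi (θ, p) ∈ D.C) :
    ∃ a b, a ≤ b ∧ (∀ u, D.psi (θ, u) ∈ D.C ↔ a ≤ u ∧ u ≤ b) ∧
      (∀ u, a ≤ u → u ≤ b → (D.F (θ, u) = 0 ↔ u = a ∨ u = b)) := by
  obtain ⟨R, hR, hb⟩ := D.exists_bound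
  have hpR : |p| ≤ R := by
    by_contra! h
    exact (hb θ p h).2 hp
  have hpR' := abs_le.1 hpR
  have hFp := D.psi_le hp
  have habs1 : ∀ u, R < u → R < |u| := fun u h => h.trans_le (le_abs_self u)
  have habs2 : ∀ u, u < -R → R < |u| := fun u h => by
    rw [lt_abs]; right; linarith
  obtain ⟨r2, hr2p, hr2⟩ : ∃ r2, p < r2 ∧ 0 < D.F (θ, r2) := by
    by_contra! h
    refine (hb θ (R + 1) (habs1 _ (by linarith))).2 (D.psi_ext_col (fun w hw => ?_) hp)
    rw [uIcc_of_le (by linarith)] at hw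
    rcases hw.1.eq_or_lt with h1 | h1
    · rw [← h1]; exact hFp
    · exact h w h1
  obtain ⟨r1, hr1p, hr1⟩ : ∃ r1, r1 < p ∧ 0 < D.F (θ, r1) := by
    by_contra! h
    refine (hb θ (-R - 1) (habs2 _ (by linarith))).2 (D.psi_ext_col (fun w hw => ?_) hp)
    rw [uIcc_of_ge (by linarith)] at hw
    rcases hw.2.eq_or_lt with h1 | h1
    · rw [h1]; exact hFp
    · exact h w h1
  have hr2R : r2 ≤ R := by
    by_contra! h
    linarith [(hb θ r2 (habs1 _ h)).1]
  have hr1R : -R ≤ r1 := by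
    by_contra! h
    linarith [(hb θ r1 (habs2 _ h)).1]
  obtain ⟨c0, c1, c2, c3, hq⟩ := D.quart (Real.cos θ • D.e + Real.sin θ • D.e') D.z
  obtain ⟨α, a, b, β, hαa, hab, hbβ, hap, hpb, hfac⟩ := quartic_factor c0 c1 c2 c3 (D.f D.z) D.hz
    (fun u => D.F (θ, u)) hq (l := -R - 1) (l' := R + 1) (by linarith) hr1p hr2p (by linarith)
    (hb θ _ (habs2 _ (by linarith))).1.le hr1 hFp hr2 (hb θ _ (habs1 _ (by linarith))).1.le
  have hz := D.hz
  have hin : ∀ u, a ≤ u → u ≤ b → D.F (θ, u) ≤ 0 := by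
    intro u h1 h2
    rw [hfac]
    refine mul_nonpos_of_nonpos_of_nonneg hz.le ?_
    have : (u - α) * (u - a) * (u - b) * (u - β) = ((u - α) * (u - a)) * ((b - u) * (β - u)) := by
      ring
    rw [this]
    exact mul_nonneg (mul_nonneg (by linarith) (by linarith))
      (mul_nonneg (by linarith) (by linarith))
  refine ⟨a, b, hab, fun u => ⟨fun hu => ?_, fun ⟨h1, h2⟩ => ?_⟩, fun u h1 h2 => ?_⟩
  · have hFu := D.psi_le hu
    have huR : |u| ≤ R := by
      by_contra! h
      exact (hb θ u h).2 hu
    have huR' := abs_le.1 huR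
    by_contra hcon
    rw [not_and_or, not_le, not_le] at hcon
    rcases hcon with hua | hub
    · by_cases huα : u ≤ α
      · refine (hb θ (-R - 1) (habs2 _ (by linarith))).2 (D.psi_ext_col (fun w hw => ?_) hu)
        rw [uIcc_of_ge (by linarith)] at hw
        have hwu := hw.2
        rw [hfac]
        refine mul_nonpos_of_nonpos_of_nonneg hz.le ?_
        have : (w - α) * (w - a) * (w - b) * (w - β) = ((α - w) * (a - w)) * ((b - w) * (β - w)) := by
          ring
        rw [this]
        exact mul_nonneg (mul_nonneg (by linarith) (by linarith))
          (mul_nonneg (by linarith) (by linarith))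
      · push Not at huα
        have : 0 < D.F (θ, u) := by
          rw [hfac]
          refine mul_pos_of_neg_of_neg hz ?_
          have : (u - α) * (u - a) * (u - b) * (u - β) = -(((u - α) * (a - u)) * ((b - u) * (β - u))) := by
            ring
          rw [this, neg_neg_iff_pos]
          exact mul_pos (mul_pos (by linarith) (by linarith)) (mul_pos (by linarith) (by linarith))
        linarith
    · by_cases huβ : β ≤ u
      · refine (hb θ (R + 1) (habs1 _ (by linarith))).2 (D.psi_ext_col (fun w hw => ?_) hu)
        rw [uIcc_of_le (by linarith)] at hw
        have hwu := hw.1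
        rw [hfac]
        refine mul_nonpos_of_nonpos_of_nonneg hz.le ?_
        exact mul_nonneg (mul_nonneg (mul_nonneg (by linarith) (by linarith))
          (by linarith)) (by linarith)
      · push Not at huβ
        have : 0 < D.F (θ, u) := by
          rw [hfac]
          refine mul_pos_of_neg_of_neg hz ?_
          exact mul_neg_of_pos_of_neg (mul_pos (mul_pos (by linarith) (by linarith))
            (by linarith)) (by linarith)
        linarith
  · refine D.psi_ext_col (fun w hw => hin w ?_ ?_) hp
    · exact le_trans (le_min hap h1) hw.1
    · exact le_trans hw.2 (max_le hpb h2)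
  · rw [hfac]
    constructor
    · intro h0
      have h3 : (u - α) ≠ 0 := by
        have : 0 < u - α := by linarith
        exact this.ne'
      have h4 : (u - β) ≠ 0 := by
        have : u - β < 0 := by linarith
        exact this.ne
      have h5 : (u - a) * (u - b) = 0 := by
        have : (D.f D.z * ((u - α) * (u - β))) * ((u - a) * (u - b)) = 0 := by rw [← h0]; ring
        exact (mul_eq_zero.1 this).resolve_left (mul_ne_zero hz.ne (mul_ne_zero h3 h4))
      rcases mul_eq_zero.1 h5 with h | h
      · left; linarith
      · right; linarith
    · rintro (rfl | rfl) <;> ring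

/-- Points of `C` with `F < 0` are interior. -/
lemma eventually_mem {θ u : ℝ} (hu : D.psi (θ, u) ∈ D.C) (hF : D.F (θ, u) < 0) :
    ∀ᶠ θ' in 𝓝 θ, D.psi (θ', u) ∈ D.C := by
  have hO : IsOpen {x | D.F x < 0} := isOpen_lt D.continuous_F continuous_const
  obtain ⟨ρ, hρ, hball⟩ := Metric.isOpen_iff.1 hO (θ, u) hF
  filter_upwards [Metric.ball_mem_nhds θ hρ] with θ' hθ'
  refine D.psi_ext (convex_ball (θ, u) ρ).isPreconnected (fun x hx => (hball hx).le)
    (Metric.mem_ball_self hρ) ?_ hu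
  rw [← ball_prod_same]
  exact ⟨hθ', Metric.mem_ball_self hρ⟩

/-- The zero locus inside `C`. -/
def K : Set (RP 3) := {x | x ∈ D.C ∧ ∃ v h, x = pt v h ∧ D.f v = 0}

lemma psi_mem_K {x : ℝ × ℝ} : D.psi x ∈ D.K ↔ D.psi x ∈ D.C ∧ D.F x = 0 := by
  constructor
  · rintro ⟨h1, v, hv, h2, h3⟩
    refine ⟨h1, ?_⟩
    obtain ⟨c, hc, hc'⟩ := D.F_zero_of_pt_eq h2.symm
    rw [F, hc', h3, mul_zero]
  · rintro ⟨h1, h2⟩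
    exact ⟨h1, _, _, rfl, h2⟩

lemma isClosed_pre : IsClosed {x | D.psi x ∈ D.K} := by
  simp only [psi_mem_K, ofPred_and]
  exact (D.closed.preimage D.continuous_psi).inter (isClosed_eq D.continuous_F continuous_const)

end Setup
end QuarticAux

namespace QuarticAux

open Set Filter Topology

namespace Setup

variable (D : Setup)

/-- The angles whose column has its lower end in the first set and its upper end in the second set. -/
def X0 (t t' : Set (RP 3)) : Set ℝ :=
  {θ | ∃ u v, u ≤ v ∧ (D.psi (θ, u) ∈ D.K ∧ D.psi (θ, u) ∈ t) ∧
    (D.psi (θ, v) ∈ D.K ∧ D.psi (θ, v) ∈ t')}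

lemma K_bound : ∃ R : ℝ, 0 < R ∧ ∀ θ u, D.psi (θ, u) ∈ D.C → u ∈ Icc (-R) R := by
  obtain ⟨R, hR, hb⟩ := D.exists_bound
  refine ⟨R, hR, fun θ u hu => abs_le.1 ?_⟩
  by_contra! h
  exact (hb θ u h).2 hu

lemma X0_closed {t t' : Set (RP 3)} (ht : IsClosed t) (ht' : IsClosed t') (a b : ℝ) :
    IsClosed (D.X0 t t' ∩ Icc a b) := by
  obtain ⟨R, hR, hb⟩ := D.K_bound
  have hg1 : Continuous (fun q : ℝ × ℝ × ℝ => (q.1, q.2.1)) := by fun_prop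
  have hg2 : Continuous (fun q : ℝ × ℝ × ℝ => (q.1, q.2.2)) := by fun_prop
  have hcl : IsClosed ({q : ℝ × ℝ × ℝ | q.2.1 ≤ q.2.2} ∩
      (((fun q : ℝ × ℝ × ℝ => (q.1, q.2.1)) ⁻¹' ({x | D.psi x ∈ D.K} ∩ D.psi ⁻¹' t)) ∩
      ((fun q : ℝ × ℝ × ℝ => (q.1, q.2.2)) ⁻¹' ({x | D.psi x ∈ D.K} ∩ D.psi ⁻¹' t')))) := by
    refine (isClosed_le (by fun_prop) (by fun_prop)).inter (IsClosed.inter ?_ ?_)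
    · exact (D.isClosed_pre.inter (ht.preimage D.continuous_psi)).preimage hg1
    · exact (D.isClosed_pre.inter (ht'.preimage D.continuous_psi)).preimage hg2
  have hcomp := ((isCompact_Icc (a := a) (b := b)).prod
    ((isCompact_Icc (a := -R) (b := R)).prod (isCompact_Icc (a := -R) (b := R)))).inter_right hcl
  have := (hcomp.image continuous_fst).isClosed
  convert this using 1
  ext θ
  constructor
  · rintro ⟨⟨u, v, huv, h1, h2⟩, hθ⟩
    exact ⟨(θ, u, v), ⟨⟨hθ, hb _ _ h1.1.1, hb _ _ h2.1.1⟩, huv, h1, h2⟩, rfl⟩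
  · rintro ⟨⟨θ', u, v⟩, ⟨⟨hθ, -, -⟩, huv, h1, h2⟩, rfl⟩
    exact ⟨⟨u, v, huv, h1, h2⟩, hθ⟩

lemma K_column {θ u v : ℝ} (huv : u < v) (hu : D.psi (θ, u) ∈ D.K) (hv : D.psi (θ, v) ∈ D.K) :
    (∀ w, D.psi (θ, w) ∈ D.C ↔ u ≤ w ∧ w ≤ v) ∧ (∀ w, D.psi (θ, w) ∈ D.K ↔ w = u ∨ w = v) := by
  obtain ⟨a, b, hab, h1, h2⟩ := D.column hu.1
  have hKK : ∀ w, D.psi (θ, w) ∈ D.K ↔ w = a ∨ w = b := by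
    intro w
    rw [psi_mem_K]
    constructor
    · rintro ⟨h3, h4⟩
      obtain ⟨h5, h6⟩ := (h1 w).1 h3
      exact (h2 w h5 h6).1 h4
    · intro h3
      have : a ≤ w ∧ w ≤ b := by rcases h3 with rfl | rfl <;> simp [hab]
      exact ⟨(h1 w).2 this, (h2 w this.1 this.2).2 h3⟩
  have hua := (hKK u).1 hu
  have hva := (hKK v).1 hv
  have : u = a ∧ v = b := by
    rcases hua with rfl | rfl <;> rcases hva with rfl | rfl
    · exact absurd huv (lt_irrefl _)
    · exact ⟨rfl, rfl⟩
    · linarith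
    · exact absurd huv (lt_irrefl _)
  obtain ⟨rfl, rfl⟩ := this
  exact ⟨h1, hKK⟩

lemma X0_open {t t' : Set (RP 3)} (ht : IsClosed t) (ht' : IsClosed t') (hcov : D.K ⊆ t ∪ t')
    (hdis : ∀ x ∈ D.K, x ∈ t → x ∈ t' → False) {θ : ℝ} (hθ : θ ∈ D.X0 t t') :
    D.X0 t t' ∈ 𝓝 θ := by
  obtain ⟨u, v, huv, ⟨hu, hut⟩, ⟨hv, hvt⟩⟩ := hθ
  have huv' : u < v := lt_of_le_of_ne huv (by rintro rfl; exact hdis _ hu hut hvt)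
  obtain ⟨hC, hK⟩ := D.K_column huv' hu hv
  have o1 : IsOpen (D.psi ⁻¹' t'ᶜ) := ht'.isOpen_compl.preimage D.continuous_psi
  have o2 : IsOpen (D.psi ⁻¹' tᶜ) := ht.isOpen_compl.preimage D.continuous_psi
  obtain ⟨ε1, hε1, hb1⟩ := Metric.isOpen_iff.1 o1 (θ, u) (fun h => hdis _ hu hut h)
  obtain ⟨ε2, hε2, hb2⟩ := Metric.isOpen_iff.1 o2 (θ, v) (fun h => hdis _ hv h hvt)
  obtain ⟨ε, hε, hεa, hεb, hεc⟩ : ∃ ε > 0, ε < ε1 ∧ ε < ε2 ∧ ε < (v - u) / 2 := by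
    refine ⟨min (min ε1 ε2) ((v - u) / 2) / 2, ?_, ?_, ?_, ?_⟩
    · have : 0 < v - u := by linarith
      positivity
    all_goals
      have h0 : 0 < min (min ε1 ε2) ((v - u) / 2) :=
        lt_min (lt_min hε1 hε2) (by linarith)
      have h1 : min (min ε1 ε2) ((v - u) / 2) ≤ ε1 := (min_le_left _ _).trans (min_le_left _ _)
      have h2 : min (min ε1 ε2) ((v - u) / 2) ≤ ε2 := (min_le_left _ _).trans (min_le_right _ _)
      have h3 : min (min ε1 ε2) ((v - u) / 2) ≤ (v - u) / 2 := min_le_right _ _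
      linarith
  have hneg : ∀ w, u < w → w < v → D.F (θ, w) < 0 := by
    intro w h1 h2
    have hw := (hC w).2 ⟨h1.le, h2.le⟩
    refine lt_of_le_of_ne (D.psi_le hw) fun h0 => ?_
    rcases (hK w).1 (D.psi_mem_K.2 ⟨hw, h0⟩) with rfl | rfl <;> linarith
  have hout : ∀ w, ¬ (u ≤ w ∧ w ≤ v) → ∀ᶠ θ' in 𝓝 θ, D.psi (θ', w) ∉ D.C := by
    intro w hw
    have hcont : Continuous (fun θ' => D.psi (θ', w)) := D.continuous_psi.comp (by fun_prop)
    exact (D.closed.isOpen_compl.preimage hcont).mem_nhds (fun h => hw ((hC w).1 h))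
  have e1 := D.eventually_mem ((hC (u + ε)).2 ⟨by linarith, by linarith⟩)
    (hneg _ (by linarith) (by linarith))
  have e2 := D.eventually_mem ((hC (v - ε)).2 ⟨by linarith, by linarith⟩)
    (hneg _ (by linarith) (by linarith))
  have e3 := hout (u - ε) (fun h => by linarith [h.1])
  have e4 := hout (v + ε) (fun h => by linarith [h.2])
  filter_upwards [e1, e2, e3, e4, Metric.ball_mem_nhds θ hε] with θ' f1 f2 f3 f4 f5
  obtain ⟨a, b, hab, h1, h2⟩ := D.column f1
  rw [h1] at f1 f2 f3 f4
  have ha : u - ε < a := by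
    by_contra! h
    exact f3 ⟨h, by linarith⟩
  have hb : b < v + ε := by
    by_contra! h
    exact f4 ⟨by linarith, h⟩
  rw [Metric.mem_ball] at f5
  have hKa : D.psi (θ', a) ∈ D.K := D.psi_mem_K.2 ⟨(h1 a).2 ⟨le_rfl, hab⟩,
    (h2 a le_rfl hab).2 (Or.inl rfl)⟩
  have hKb : D.psi (θ', b) ∈ D.K := D.psi_mem_K.2 ⟨(h1 b).2 ⟨hab, le_rfl⟩,
    (h2 b hab le_rfl).2 (Or.inr rfl)⟩
  refine ⟨a, b, hab, ⟨hKa, ?_⟩, ⟨hKb, ?_⟩⟩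
  · refine (hcov hKa).resolve_right fun h => ?_
    have : ((θ', a) : ℝ × ℝ) ∈ Metric.ball (θ, u) ε1 := by
      rw [← ball_prod_same]
      refine ⟨by rw [Metric.mem_ball]; linarith, ?_⟩
      rw [Metric.mem_ball, Real.dist_eq, abs_lt]
      constructor <;> linarith [f1.1]
    exact hb1 this h
  · refine (hcov hKb).resolve_left fun h => ?_
    have : ((θ', b) : ℝ × ℝ) ∈ Metric.ball (θ, v) ε2 := by
      rw [← ball_prod_same]
      refine ⟨by rw [Metric.mem_ball]; linarith, ?_⟩
      rw [Metric.mem_ball, Real.dist_eq, abs_lt]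
      constructor <;> linarith [f2.2]
    exact hb2 this h

lemma no_split_le {t t' : Set (RP 3)} (ht : IsClosed t) (ht' : IsClosed t') (hcov : D.K ⊆ t ∪ t')
    (hdis : ∀ x ∈ D.K, x ∈ t → x ∈ t' → False) {θ : ℝ} (hθ : θ ∈ D.X0 t t') : False := by
  have hsub : Icc θ (θ + Real.pi) ⊆ D.X0 t t' :=
    (D.X0_closed ht ht' θ (θ + Real.pi)).Icc_subset_of_forall_mem_nhdsWithin hθ
      fun x hx => mem_nhdsWithin_of_mem_nhds (D.X0_open ht ht' hcov hdis hx.1)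
  obtain ⟨u, v, huv, ⟨hu, hut⟩, ⟨hv, hvt⟩⟩ := hsub (right_mem_Icc.2 (by linarith [Real.pi_pos]))
  obtain ⟨u0, v0, huv0, ⟨hu0, hut0⟩, ⟨hv0, hvt0⟩⟩ := hθ
  have huv' : u < v := lt_of_le_of_ne huv (by rintro rfl; exact hdis _ hu hut hvt)
  have huv0' : u0 < v0 := lt_of_le_of_ne huv0 (by rintro rfl; exact hdis _ hu0 hut0 hvt0)
  rw [← D.psi_add_pi] at hu0 hut0 hv0 hvt0
  obtain ⟨-, h1⟩ := D.K_column huv' hu hv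
  have h2 := (h1 _).1 hu0
  have h3 := (h1 _).1 hv0
  have h4 : -v0 = u := by
    rcases h2 with h2 | h2 <;> rcases h3 with h3 | h3 <;> linarith
  rw [h4] at hvt0
  exact hdis _ hu hut hvt0

lemma no_split {t t' : Set (RP 3)} (ht : IsClosed t) (ht' : IsClosed t') (hcov : D.K ⊆ t ∪ t')
    (hdis : ∀ x ∈ D.K, x ∈ t → x ∈ t' → False) {θ u v : ℝ} (hu : D.psi (θ, u) ∈ D.K)
    (hut : D.psi (θ, u) ∈ t) (hv : D.psi (θ, v) ∈ D.K) (hvt : D.psi (θ, v) ∈ t') : False := by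
  rcases le_total u v with h | h
  · exact D.no_split_le ht ht' hcov hdis (θ := θ) ⟨u, v, h, ⟨hu, hut⟩, ⟨hv, hvt⟩⟩
  · rw [← D.psi_add_pi] at hu hut hv hvt
    exact D.no_split_le ht ht' hcov hdis (θ := θ + Real.pi)
      ⟨-u, -v, neg_le_neg h, ⟨hu, hut⟩, ⟨hv, hvt⟩⟩

/-- The part of `C` lying over columns with an end in `t`. -/
def part (t : Set (RP 3)) : Set (RP 3) :=
  {x | ∃ θ ∈ Icc (-Real.pi) Real.pi, ∃ w u, x = D.psi (θ, w) ∧ D.psi (θ, w) ∈ D.C ∧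
    D.psi (θ, u) ∈ D.K ∧ D.psi (θ, u) ∈ t}

lemma part_closed {t : Set (RP 3)} (ht : IsClosed t) : IsClosed (D.part t) := by
  obtain ⟨R, hR, hb⟩ := D.K_bound
  have hg1 : Continuous (fun q : ℝ × ℝ × ℝ => (q.1, q.2.1)) := by fun_prop
  have hg2 : Continuous (fun q : ℝ × ℝ × ℝ => (q.1, q.2.2)) := by fun_prop
  have hcl : IsClosed (((fun q : ℝ × ℝ × ℝ => (q.1, q.2.1)) ⁻¹' (D.psi ⁻¹' D.C)) ∩
      ((fun q : ℝ × ℝ × ℝ => (q.1, q.2.2)) ⁻¹' ({x | D.psi x ∈ D.K} ∩ D.psi ⁻¹' t))) :=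
    ((D.closed.preimage D.continuous_psi).preimage hg1).inter
      ((D.isClosed_pre.inter (ht.preimage D.continuous_psi)).preimage hg2)
  have hcomp := ((isCompact_Icc (a := -Real.pi) (b := Real.pi)).prod
    ((isCompact_Icc (a := -R) (b := R)).prod (isCompact_Icc (a := -R) (b := R)))).inter_right hcl
  have := (hcomp.image (D.continuous_psi.comp hg1)).isClosed
  convert this using 1
  ext x
  constructor
  · rintro ⟨θ, hθ, w, u, rfl, h1, h2, h3⟩
    exact ⟨(θ, w, u), ⟨⟨hθ, hb _ _ h1, hb _ _ h2.1⟩, h1, h2, h3⟩, rfl⟩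
  · rintro ⟨⟨θ, w, u⟩, ⟨⟨hθ, -, -⟩, h1, h2, h3⟩, rfl⟩
    exact ⟨θ, hθ, w, u, rfl, h1, h2, h3⟩

lemma exists_K {θ w : ℝ} (hw : D.psi (θ, w) ∈ D.C) : ∃ u, D.psi (θ, u) ∈ D.K := by
  obtain ⟨a, b, hab, h1, h2⟩ := D.column hw
  exact ⟨a, D.psi_mem_K.2 ⟨(h1 a).2 ⟨le_rfl, hab⟩, (h2 a le_rfl hab).2 (Or.inl rfl)⟩⟩

lemma K_nonempty (h : D.C.Nonempty) : D.K.Nonempty := by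
  obtain ⟨x, hx⟩ := h
  obtain ⟨θ, -, w, rfl⟩ := D.psi_surj hx
  obtain ⟨u, hu⟩ := D.exists_K hx
  exact ⟨_, hu⟩

theorem K_preconnected : IsPreconnected D.K := by
  rw [isPreconnected_closed_iff]
  intro t t' ht ht' hcov hne hne'
  by_contra hcon
  have hdis : ∀ x ∈ D.K, x ∈ t → x ∈ t' → False := fun x h1 h2 h3 => hcon ⟨x, h1, h2, h3⟩
  have hpart : ∀ s : Set (RP 3), (D.K ∩ s).Nonempty → (D.C ∩ D.part s).Nonempty := by
    rintro s ⟨x, hx, hxs⟩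
    obtain ⟨θ, hθ, w, rfl⟩ := D.psi_surj hx.1
    exact ⟨_, hx.1, θ, hθ, w, w, rfl, hx.1, hx, hxs⟩
  have hsub : D.C ⊆ D.part t ∪ D.part t' := by
    intro x hx
    obtain ⟨θ, hθ, w, rfl⟩ := D.psi_surj hx
    obtain ⟨u, hu⟩ := D.exists_K hx
    rcases hcov hu with h | h
    · exact Or.inl ⟨θ, hθ, w, u, rfl, hx, hu, h⟩
    · exact Or.inr ⟨θ, hθ, w, u, rfl, hx, hu, h⟩
  obtain ⟨x, hx, ⟨θ, hθ, w, u, h1, h2, h3, h4⟩, ⟨θ', hθ', w', u', h1', h2', h3', h4'⟩⟩ :=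
    isPreconnected_closed_iff.1 D.preconn _ _ (D.part_closed ht) (D.part_closed ht') hsub
      (hpart t hne) (hpart t' hne')
  obtain ⟨u'', hu''⟩ := D.psi_line (h1.symm.trans h1') u'
  rw [hu''] at h3' h4'
  exact D.no_split ht ht' hcov hdis h3 h4 h3' h4'

end Setup
end QuarticAux

namespace QuarticAux

open Set Filter Topology Matrix

lemma cc_eq_iff {X : Type*} [TopologicalSpace X] (S : Set X) (x y : S) :
    (x : ConnectedComponents S) = y ↔ (y : X) ∈ connectedComponentIn S x := by
  rw [eq_comm, ConnectedComponents.coe_eq_coe', connectedComponentIn_eq_image x.2]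
  constructor
  · intro h
    exact ⟨y, h, rfl⟩
  · rintro ⟨y', h, h'⟩
    rw [← Subtype.ext h']
    exact h

lemma cc_eq_of_preconn {X : Type*} [TopologicalSpace X] (S : Set X) (x y : S) (t : Set X)
    (ht : IsPreconnected t) (htS : t ⊆ S) (hx : (x : X) ∈ t) (hy : (y : X) ∈ t) :
    (x : ConnectedComponents S) = y :=
  (cc_eq_iff S x y).2 (ht.subset_connectedComponentIn hx htS hy)

lemma cot_inj {τ τ' : ℝ} (h : τ ∈ Ioo 0 Real.pi) (h' : τ' ∈ Ioo 0 Real.pi)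
    (he : Real.cos τ / Real.sin τ = Real.cos τ' / Real.sin τ') : τ = τ' := by
  have h1 := Real.sin_pos_of_mem_Ioo h
  have h2 := Real.sin_pos_of_mem_Ioo h'
  rw [div_eq_div_iff h1.ne' h2.ne'] at he
  have h3 : Real.sin (τ' - τ) = 0 := by
    rw [Real.sin_sub]
    linarith
  have := (Real.sin_eq_zero_iff_of_lt_of_lt (by linarith [h.2, h'.1]) (by linarith [h.1, h'.2])).1 h3
  linarith

lemma Mang_symm {M₁ M₂ M₃ : Matrix (Fin 3) (Fin 3) ℝ}
    (hM₁ : M₁.IsSymm) (hM₂ : M₂.IsSymm) (hM₃ : M₃.IsSymm) (φ : ℝ) :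
    (Mang M₁ M₂ M₃ φ).IsSymm := by
  unfold Mang Mt
  exact ((hM₁.smul _).add (hM₂.smul _)).add (hM₃.smul _)

lemma Mang_periodic (M₁ M₂ M₃ : Matrix (Fin 3) (Fin 3) ℝ) :
    Function.Periodic (Mang M₁ M₂ M₃) Real.pi := Mang_add_pi M₁ M₂ M₃

lemma interval_exists {M₁ M₂ M₃ : Matrix (Fin 3) (Fin 3) ℝ}
    (hM₁ : M₁.IsSymm) (hM₂ : M₂.IsSymm) (hM₃ : M₃.IsSymm)
    (hsf : Squarefree (binarySextic M₁ M₂ M₃)) {φ₀ : ℝ} (h0 : φ₀ ∉ T (Mang M₁ M₂ M₃))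
    {x : RP 3} (hx : ∃ φ, x ∈ pos (Mang M₁ M₂ M₃ φ)) :
    ∃ m n s, φ₀ < m ∧ m ≤ s ∧ s ≤ n ∧ m < n ∧ n < φ₀ + Real.pi ∧
      Icc m n ⊆ T (Mang M₁ M₂ M₃) ∧ (Mang M₁ M₂ M₃ m).det = 0 ∧ (Mang M₁ M₂ M₃ n).det = 0 ∧
      x ∈ pos (Mang M₁ M₂ M₃ s) := by
  obtain ⟨φ, hφ⟩ := hx
  obtain ⟨s, hs, hse⟩ := (Mang_periodic M₁ M₂ M₃).exists_mem_Ico Real.pi_pos φ φ₀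
  rw [hse] at hφ
  have hcl := T_closed _ (Mang_cont M₁ M₂ M₃)
  have hsy := Mang_symm hM₁ hM₂ hM₃
  have hsT : s ∈ T (Mang M₁ M₂ M₃) := by
    obtain ⟨v, hv, -, h⟩ := hφ
    exact ⟨v, hv, h⟩
  have hs0 : φ₀ < s := by
    rcases hs.1.lt_or_eq with h | h
    · exact h
    · exact absurd (h ▸ hsT) h0
  have h0' : φ₀ + Real.pi ∉ T (Mang M₁ M₂ M₃) := by
    rintro ⟨v, hv, h⟩
    rw [Mang_add_pi] at h
    exact h0 ⟨v, hv, h⟩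
  obtain ⟨m, hm1, hm2, hm3, hm4⟩ := gap_left hcl hs0 h0 hsT
  obtain ⟨n, hn1, hn2, hn3, hn4⟩ := gap_right hcl hs.2 h0' hsT
  have dm : (Mang M₁ M₂ M₃ m).det = 0 :=
    det_zero_of_limit (Mang_cont M₁ M₂ M₃) hsy (hm3 ⟨le_rfl, hm2⟩)
      (hm4.filter_mono nhdsWithin_le_nhds)
  have dn : (Mang M₁ M₂ M₃ n).det = 0 :=
    det_zero_of_limit (Mang_cont M₁ M₂ M₃) hsy (hn3 ⟨hn2, le_rfl⟩)
      (hn4.filter_mono nhdsWithin_le_nhds)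
  refine ⟨m, n, s, hm1, hm2, hn2, ?_, hn1, ?_, dm, dn, hφ⟩
  · rcases (hm2.trans hn2).lt_or_eq with h | h
    · exact h
    · subst h
      exact (sign_change M₁ M₂ M₃ hsf m dm
        (hn4.mono fun x hx => (det_neg_of_notMem hsy hx).le)
        (hm4.mono fun x hx => (det_neg_of_notMem hsy hx).le)).elim
  · intro r hr
    rcases le_total r s with h | h
    · exact hm3 ⟨hr.1, h⟩
    · exact hn3 ⟨h, hr.2⟩

lemma card_cc {M₁ M₂ M₃ : Matrix (Fin 3) (Fin 3) ℝ}
    (hM₁ : M₁.IsSymm) (hM₂ : M₂.IsSymm) (hM₃ : M₃.IsSymm)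
    (hsf : Squarefree (binarySextic M₁ M₂ M₃)) {φ₀ : ℝ} (h0 : φ₀ ∉ T (Mang M₁ M₂ M₃))
    (S : Set (RP 3)) (hS : S = {x | ∃ φ, x ∈ pos (Mang M₁ M₂ M₃ φ)}) :
    Finite (ConnectedComponents S) ∧ Nat.card (ConnectedComponents S) ≤ 3 := by
  have hcl := T_closed _ (Mang_cont M₁ M₂ M₃)
  have hsy := Mang_symm hM₁ hM₂ hM₃
  have hrep : ∀ c : ConnectedComponents S, ∃ x : S, (x : ConnectedComponents S) = c := fun c =>
    ConnectedComponents.surjective_coe c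
  choose x hx using hrep
  have hinterv : ∀ c : ConnectedComponents S, _ := fun c =>
    interval_exists hM₁ hM₂ hM₃ hsf h0 (x := (x c : RP 3)) (hS.subset (x c).2)
  choose m n s hm hms hsn hmn hn hT dm dn hpos using hinterv
  -- overlapping intervals give equal components
  have hover : ∀ c c' t, t ∈ Icc (m c) (n c) → t ∈ Icc (m c') (n c') → c = c' := by
    intro c c' t ht ht'
    rw [← hx c, ← hx c']
    have hsub : Icc (min (m c) (m c')) (max (n c) (n c')) ⊆ T (Mang M₁ M₂ M₃) := by
      intro r hr
      rcases le_total r t with h | h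
      · rcases min_le_iff.1 hr.1 with h1 | h1
        · exact hT c ⟨h1, h.trans ht.2⟩
        · exact hT c' ⟨h1, h.trans ht'.2⟩
      · rcases le_max_iff.1 hr.2 with h1 | h1
        · exact hT c ⟨ht.1.trans h, h1⟩
        · exact hT c' ⟨ht'.1.trans h, h1⟩
    refine cc_eq_of_preconn S _ _ _
      (union_preconnected _ (Mang_cont M₁ M₂ M₃) hsy _ _ hsub) ?_ ?_ ?_
    · rintro y ⟨r, -, hr⟩
      rw [hS]
      exact ⟨r, hr⟩
    · exact ⟨s c, ⟨(min_le_left _ _).trans (hms c), (hsn c).trans (le_max_left _ _)⟩, hpos c⟩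
    · exact ⟨s c', ⟨(min_le_right _ _).trans (hms c'), (hsn c').trans (le_max_right _ _)⟩, hpos c'⟩
  obtain ⟨p, hp6, hp⟩ := exists_root_poly M₁ M₂ M₃ φ₀
  have hp0 : p ≠ 0 := by
    rintro rfl
    have h1 : ∀ᶠ r in 𝓝[>] φ₀, r ∉ T (Mang M₁ M₂ M₃) :=
      mem_nhdsWithin_of_mem_nhds (hcl.isOpen_compl.mem_nhds h0)
    have h2 : ∀ᶠ r in 𝓝[>] φ₀, r ∈ Ioo φ₀ (φ₀ + Real.pi) :=
      Ioo_mem_nhdsGT (by linarith [Real.pi_pos])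
    obtain ⟨r, hr1, hr2⟩ := (h1.and h2).exists
    have h3 := det_neg_of_notMem hsy hr1
    have h4 := hp (r - φ₀)
      (Real.sin_pos_of_pos_of_lt_pi (by linarith [hr2.1]) (by linarith [hr2.2])).ne'
    rw [add_sub_cancel, Polynomial.eval_zero, mul_zero] at h4
    linarith
  let e : ConnectedComponents S × Bool → ℝ := fun q => if q.2 then m q.1 else n q.1
  have e_mem : ∀ q, e q ∈ Icc (m q.1) (n q.1) := by
    rintro ⟨c, b⟩
    cases b
    · exact ⟨(hmn c).le, le_rfl⟩
    · exact ⟨le_rfl, (hmn c).le⟩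
  have e_inj : Function.Injective e := by
    rintro ⟨c, b⟩ ⟨c', b'⟩ h
    have h1 : c = c' := hover c c' _ (e_mem (c, b)) (h ▸ e_mem (c', b'))
    subst h1
    have hlt := hmn c
    cases b <;> cases b'
    · rfl
    · exact absurd h hlt.ne'
    · exact absurd h hlt.ne
    · rfl
  have e_Ioo : ∀ q, e q - φ₀ ∈ Ioo 0 Real.pi := fun q =>
    ⟨by linarith [(e_mem q).1, hm q.1], by linarith [(e_mem q).2, hn q.1]⟩
  have e_det : ∀ q, (Mang M₁ M₂ M₃ (e q)).det = 0 := by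
    rintro ⟨c, b⟩
    cases b
    · exact dn c
    · exact dm c
  let F : ConnectedComponents S × Bool → p.roots.toFinset := fun q =>
    ⟨Real.cos (e q - φ₀) / Real.sin (e q - φ₀), by
      rw [Multiset.mem_toFinset, Polynomial.mem_roots hp0]
      have hs := Real.sin_pos_of_mem_Ioo (e_Ioo q)
      have h1 := hp (e q - φ₀) hs.ne'
      rw [add_sub_cancel, e_det] at h1
      rcases mul_eq_zero.1 h1.symm with h2 | h2
      · exact absurd h2 (pow_ne_zero _ hs.ne')
      · exact h2⟩
  have F_inj : Function.Injective F := by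
    intro q q' h
    have h1 := cot_inj (e_Ioo q) (e_Ioo q') (congrArg Subtype.val h)
    exact e_inj (by linarith)
  have hfin : Finite (ConnectedComponents S × Bool) := Finite.of_injective F F_inj
  have hfin' : Finite (ConnectedComponents S) :=
    Finite.of_injective (fun c => (c, true)) (fun a b h => congrArg Prod.fst h)
  refine ⟨hfin', ?_⟩
  have h1 := Nat.card_le_card_of_injective F F_inj
  rw [Nat.card_prod, Nat.card_eq_fintype_card (α := Bool), Fintype.card_bool,
    Nat.card_eq_fintype_card (α := p.roots.toFinset), Fintype.card_coe] at h1
  have h2 := Multiset.toFinset_card_le p.roots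
  have h3 := Polynomial.card_roots' p
  omega

end QuarticAux

namespace QuarticAux

open Set Filter Topology Matrix

lemma exists_compl (z : Fin 3 → ℝ) (hz : z ≠ 0) : ∃ e e' : Fin 3 → ℝ,
    (∀ v : Fin 3 → ℝ, ∃ a b c : ℝ, v = a • e + b • e' + c • z) ∧
    (∀ a b c : ℝ, a • e + b • e' + c • z = 0 → a = 0 ∧ b = 0 ∧ c = 0) := by
  obtain ⟨k, hk⟩ := Function.ne_iff.1 hz
  have key : ∀ (a b c : ℝ) (e e' : Fin 3 → ℝ), a • e + b • e' + c • z = 0 →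
      ∀ i, a * e i + b * e' i + c * z i = 0 := fun a b c e e' h i => congrFun h i
  fin_cases k
  · have hk : z 0 ≠ 0 := hk
    refine ⟨![0, 1, 0], ![0, 0, 1], fun v => ⟨v 1 - v 0 / z 0 * z 1, v 2 - v 0 / z 0 * z 2,
      v 0 / z 0, ?_⟩, fun a b c h => ?_⟩
    · ext i
      fin_cases i <;> simp [hk]
    · have h0 := key _ _ _ _ _ h 0
      have h1 := key _ _ _ _ _ h 1
      have h2 := key _ _ _ _ _ h 2
      simp [hk] at h0 h1 h2
      subst h0
      exact ⟨by simpa using h1, by simpa using h2, rfl⟩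
  · have hk : z 1 ≠ 0 := hk
    refine ⟨![1, 0, 0], ![0, 0, 1], fun v => ⟨v 0 - v 1 / z 1 * z 0, v 2 - v 1 / z 1 * z 2,
      v 1 / z 1, ?_⟩, fun a b c h => ?_⟩
    · ext i
      fin_cases i <;> simp [hk]
    · have h0 := key _ _ _ _ _ h 0
      have h1 := key _ _ _ _ _ h 1
      have h2 := key _ _ _ _ _ h 2
      simp [hk] at h0 h1 h2
      subst h1
      exact ⟨by simpa using h0, by simpa using h2, rfl⟩
  · have hk : z 2 ≠ 0 := hk
    refine ⟨![1, 0, 0], ![0, 1, 0], fun v => ⟨v 0 - v 2 / z 2 * z 0, v 1 - v 2 / z 2 * z 1,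
      v 2 / z 2, ?_⟩, fun a b c h => ?_⟩
    · ext i
      fin_cases i <;> simp [hk]
    · have h0 := key _ _ _ _ _ h 0
      have h1 := key _ _ _ _ _ h 1
      have h2 := key _ _ _ _ _ h 2
      simp [hk] at h0 h1 h2
      subst h2
      exact ⟨by simpa using h0, by simpa using h1, rfl⟩

lemma exists_neg_segment (f : (Fin 3 → ℝ) → ℝ) (v : Fin 3 → ℝ) (hv : v ≠ 0) (h0 : f v = 0)
    (hd : fderiv ℝ f v ≠ 0) :
    ∃ w : Fin 3 → ℝ, ∃ t₁ : ℝ, 0 < t₁ ∧ ∀ t ∈ Ioc 0 t₁, v + t • w ≠ 0 ∧ f (v + t • w) < 0 := by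
  have hdiff : DifferentiableAt ℝ f v := by
    by_contra h
    exact hd (fderiv_zero_of_not_differentiableAt h)
  obtain ⟨w, hw⟩ : ∃ w, fderiv ℝ f v w < 0 := by
    by_contra! h
    apply hd
    ext1 w
    have h1 := h w
    have h2 := h (-w)
    rw [map_neg] at h2
    exact le_antisymm (neg_nonneg.1 h2) h1
  have hder : HasDerivAt (fun t : ℝ => f (v + t • w)) (fderiv ℝ f v w) 0 := by
    have hl : HasDerivAt (fun t : ℝ => v + t • w) w 0 := by
      simpa using ((hasDerivAt_id (0 : ℝ)).smul_const w).const_add v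
    have hf : HasFDerivAt f (fderiv ℝ f v) (v + (0 : ℝ) • w) := by
      simpa using hdiff.hasFDerivAt
    exact hf.comp_hasDerivAt 0 hl
  have h1 : ∀ᶠ t in 𝓝[>] (0 : ℝ), slope (fun t : ℝ => f (v + t • w)) 0 t < 0 :=
    ((hasDerivAt_iff_tendsto_slope.1 hder).eventually (gt_mem_nhds hw)).filter_mono
      (nhdsWithin_mono _ fun t (ht : 0 < t) => ht.ne')
  have h2 : ∀ᶠ t in 𝓝[>] (0 : ℝ), v + t • w ≠ 0 := by
    have hc : Continuous (fun t : ℝ => v + t • w) := by fun_prop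
    exact (hc.continuousAt.eventually_ne (by simpa using hv)).filter_mono nhdsWithin_le_nhds
  obtain ⟨ε, hε, hsub⟩ := mem_nhdsGT_iff_exists_Ioo_subset.1 (h1.and h2)
  have hε : 0 < ε := hε
  refine ⟨w, ε / 2, by positivity, fun t ht => ?_⟩
  obtain ⟨h3, h4⟩ := hsub (show t ∈ Ioo 0 ε from ⟨ht.1, by linarith [ht.2]⟩)
  refine ⟨h4, ?_⟩
  rw [slope_def_field] at h3
  simp only [zero_smul, add_zero, h0, sub_zero] at h3
  by_contra! h5
  exact absurd (div_nonneg h5 ht.1.le) (not_le.2 h3)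

lemma isClosed_of_pt {S : Set (RP 3)} {f : (Fin 3 → ℝ) → ℝ} (fc : Continuous f)
    (hS : ∀ v h, pt v h ∈ S ↔ f v ≤ 0) : IsClosed S := by
  have hq : IsQuotientMap (Quot.mk (projRel 3) : {v : Fin 3 → ℝ // v ≠ 0} → RP 3) :=
    isQuotientMap_quot_mk
  refine hq.isClosed_preimage.1 ?_
  have : Quot.mk (projRel 3) ⁻¹' S = {P : {v : Fin 3 → ℝ // v ≠ 0} | f P ≤ 0} := by
    ext P
    exact hS P.1 P.2
  rw [this]
  exact isClosed_le (fc.comp continuous_subtype_val) continuous_const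

lemma isClosed_ccIn {X : Type*} [TopologicalSpace X] {S : Set X} (hS : IsClosed S) (x : X) :
    IsClosed (connectedComponentIn S x) := by
  by_cases hx : x ∈ S
  · rw [connectedComponentIn_eq_image hx]
    exact hS.isClosedEmbedding_subtypeVal.isClosedMap _ isClosed_connectedComponent
  · rw [connectedComponentIn_eq_empty hx]
    exact isClosed_empty

lemma exists_neg_point {S : Set (RP 3)} {f : (Fin 3 → ℝ) → ℝ}
    (hS : ∀ v h, pt v h ∈ S ↔ f v ≤ 0) (hsm : ∀ P, P ≠ 0 → f P = 0 → fderiv ℝ f P ≠ 0)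
    (v : Fin 3 → ℝ) (h : v ≠ 0) (hv : f v ≤ 0) :
    ∃ z hz, f z < 0 ∧ pt z hz ∈ connectedComponentIn S (pt v h) := by
  rcases hv.lt_or_eq with h1 | h1
  · exact ⟨v, h, h1, mem_connectedComponentIn ((hS v h).2 hv)⟩
  · obtain ⟨w, t₁, ht₁, hw⟩ := exists_neg_segment f v h h1 (hsm v h h1)
    have hz := hw t₁ ⟨ht₁, le_rfl⟩
    have hseg : ∀ s : ℝ, (1 - s) • v + s • (v + t₁ • w) = v + (s * t₁) • w := fun s => by module
    have hval : ∀ s ∈ Icc (0 : ℝ) 1, v + (s * t₁) • w ≠ 0 ∧ f (v + (s * t₁) • w) ≤ 0 := by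
      intro s hs
      rcases hs.1.lt_or_eq with h2 | h2
      · have := hw (s * t₁) ⟨by positivity, by nlinarith [hs.2]⟩
        exact ⟨this.1, this.2.le⟩
      · subst h2
        simpa using ⟨h, hv⟩
    obtain ⟨t, htS, h2, h3, h4⟩ := segment_conn (S := S) v (v + t₁ • w) h hz.1
      (fun s hs => by rw [hseg]; exact (hval s hs).1)
      (fun s hs h' => by rw [hS, hseg]; exact (hval s hs).2)
    exact ⟨_, hz.1, hz.2, h4.subset_connectedComponentIn h2 htS h3⟩

lemma K_facts {S Z : Set (RP 3)} {f : (Fin 3 → ℝ) → ℝ} (fc : Continuous f)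
    (hom : ∀ (c : ℝ) v, f (c • v) = c ^ 4 * f v)
    (quart : ∀ d z, ∃ c0 c1 c2 c3 : ℝ, ∀ u : ℝ,
      f (d + u • z) = c0 + c1 * u + c2 * u ^ 2 + c3 * u ^ 3 + f z * u ^ 4)
    (hsm : ∀ P, P ≠ 0 → f P = 0 → fderiv ℝ f P ≠ 0)
    (hS : ∀ v h, pt v h ∈ S ↔ f v ≤ 0) (hZ : ∀ v h, pt v h ∈ Z ↔ f v = 0)
    (hnc : ¬ IsPreconnected S) {p : RP 3} (hp : p ∈ S) :
    (connectedComponentIn S p ∩ Z).Nonempty ∧ IsPreconnected (connectedComponentIn S p ∩ Z) := by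
  obtain ⟨y, hyS, hy⟩ : ∃ y ∈ S, y ∉ connectedComponentIn S p := by
    by_contra! h
    have : connectedComponentIn S p = S := (connectedComponentIn_subset S p).antisymm h
    exact hnc (this ▸ isPreconnected_connectedComponentIn)
  obtain ⟨v, hv, rfl⟩ := exists_pt y
  obtain ⟨z, hz0, hz, hzy⟩ := exists_neg_point hS hsm v hv ((hS v hv).1 hyS)
  obtain ⟨e, e', hspan, hind⟩ := exists_compl z hz0
  let D : Setup :=
    { f := f
      fc := fc
      hom := hom
      quart := quart
      z := z
      e := e
      e' := e'
      hz := hz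
      span := hspan
      indep := hind
      C := connectedComponentIn S p
      closed := isClosed_ccIn (isClosed_of_pt fc hS) p
      preconn := isPreconnected_connectedComponentIn
      CS := fun v h hvC => (hS v h).1 (connectedComponentIn_subset S p hvC)
      ext := by
        rintro A hA hAS ⟨q, hqA, hqC⟩
        rw [connectedComponentIn_eq hqC]
        refine hA.subset_connectedComponentIn hqA fun r hr => ?_
        obtain ⟨w, hw, rfl⟩ := exists_pt r
        exact (hS w hw).2 (hAS w hw hr)
      zC := by
        intro h hzC
        apply hy
        rw [connectedComponentIn_eq hzC, ← connectedComponentIn_eq hzy]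
        exact mem_connectedComponentIn hyS }
  have hK : D.K = connectedComponentIn S p ∩ Z := by
    ext x
    constructor
    · rintro ⟨h1, w, hw, rfl, h2⟩
      exact ⟨h1, (hZ w hw).2 h2⟩
    · rintro ⟨h1, h2⟩
      obtain ⟨w, hw, rfl⟩ := exists_pt x
      exact ⟨h1, w, hw, rfl, (hZ w hw).1 h2⟩
  rw [← hK]
  exact ⟨D.K_nonempty ⟨p, mem_connectedComponentIn hp⟩, D.K_preconnected⟩

lemma cc_equiv {S Z : Set (RP 3)} {f : (Fin 3 → ℝ) → ℝ} (fc : Continuous f)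
    (hom : ∀ (c : ℝ) v, f (c • v) = c ^ 4 * f v)
    (quart : ∀ d z, ∃ c0 c1 c2 c3 : ℝ, ∀ u : ℝ,
      f (d + u • z) = c0 + c1 * u + c2 * u ^ 2 + c3 * u ^ 3 + f z * u ^ 4)
    (hsm : ∀ P, P ≠ 0 → f P = 0 → fderiv ℝ f P ≠ 0)
    (hS : ∀ v h, pt v h ∈ S ↔ f v ≤ 0) (hZ : ∀ v h, pt v h ∈ Z ↔ f v = 0)
    (hnc : ¬ IsPreconnected S) :
    Nonempty (ConnectedComponents S ≃ ConnectedComponents Z) := by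
  have hZS : Z ⊆ S := by
    intro x hx
    obtain ⟨v, hv, rfl⟩ := exists_pt x
    exact (hS v hv).2 ((hZ v hv).1 hx).le
  have hK := fun p (hp : p ∈ S) => K_facts fc hom quart hsm hS hZ hnc hp
  let g : ConnectedComponents Z → ConnectedComponents S :=
    (continuous_inclusion hZS).connectedComponentsMap
  have hg : ∀ x : Z, g x = (inclusion hZS x : S) := fun x => rfl
  refine ⟨(Equiv.ofBijective g ⟨?_, ?_⟩).symm⟩
  · intro a b hab
    obtain ⟨x, rfl⟩ := ConnectedComponents.surjective_coe a
    obtain ⟨y, rfl⟩ := ConnectedComponents.surjective_coe b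
    rw [hg, hg, cc_eq_iff] at hab
    exact cc_eq_of_preconn Z x y _ (hK x (hZS x.2)).2 inter_subset_right
      ⟨mem_connectedComponentIn (hZS x.2), x.2⟩ ⟨hab, y.2⟩
  · intro c
    obtain ⟨x, rfl⟩ := ConnectedComponents.surjective_coe c
    obtain ⟨y, hy1, hy2⟩ := (hK x x.2).1
    refine ⟨((⟨y, hy2⟩ : Z) : ConnectedComponents Z), ?_⟩
    rw [hg, eq_comm, cc_eq_iff]
    exact hy1

end QuarticAux

namespace QuarticAux

open Set Filter Topology Matrix

lemma quad_Mang (M₁ M₂ M₃ : Matrix (Fin 3) (Fin 3) ℝ) (φ : ℝ) (v : Fin 3 → ℝ) :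
    v ⬝ᵥ (Mang M₁ M₂ M₃ φ *ᵥ v) = Real.cos φ ^ 2 * (v ⬝ᵥ (M₁ *ᵥ v)) +
      2 * Real.cos φ * Real.sin φ * (v ⬝ᵥ (M₂ *ᵥ v)) + Real.sin φ ^ 2 * (v ⬝ᵥ (M₃ *ᵥ v)) := by
  simp only [Mang, Mt, Matrix.add_mulVec, Matrix.smul_mulVec, dotProduct_add, dotProduct_smul,
    smul_eq_mul]

lemma neg_of_val {q₁ q₂ q₃ φ : ℝ} (hq : q₁ < 0) (hf : 0 < q₁ * q₃ - q₂ ^ 2) :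
    Real.cos φ ^ 2 * q₁ + 2 * Real.cos φ * Real.sin φ * q₂ + Real.sin φ ^ 2 * q₃ < 0 := by
  by_contra! h
  have h1 : q₁ * (Real.cos φ ^ 2 * q₁ + 2 * Real.cos φ * Real.sin φ * q₂ + Real.sin φ ^ 2 * q₃) ≤ 0 :=
    mul_nonpos_of_nonpos_of_nonneg hq.le h
  have h2 : q₁ * (Real.cos φ ^ 2 * q₁ + 2 * Real.cos φ * Real.sin φ * q₂ + Real.sin φ ^ 2 * q₃) =
      (Real.cos φ * q₁ + Real.sin φ * q₂) ^ 2 + Real.sin φ ^ 2 * (q₁ * q₃ - q₂ ^ 2) := by ring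
  have h3 := sq_nonneg (Real.cos φ * q₁ + Real.sin φ * q₂)
  have h4 := mul_nonneg (sq_nonneg (Real.sin φ)) hf.le
  have h5 : Real.sin φ ^ 2 * (q₁ * q₃ - q₂ ^ 2) = 0 := by linarith
  have h6 : Real.sin φ = 0 := by
    rcases mul_eq_zero.1 h5 with h | h
    · exact pow_eq_zero_iff (two_ne_zero) |>.1 h
    · exact absurd h hf.ne'
  have h7 : (Real.cos φ * q₁ + Real.sin φ * q₂) ^ 2 = 0 := by linarith
  rw [h6, zero_mul, add_zero] at h7
  have h8 : Real.cos φ = 0 := by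
    rcases mul_eq_zero.1 (pow_eq_zero_iff (two_ne_zero) |>.1 h7) with h | h
    · exact h
    · exact absurd h hq.ne
  have := Real.sin_sq_add_cos_sq φ
  rw [h6, h8] at this
  norm_num at this

lemma param_iff (q₁ q₂ q₃ : ℝ) : (0 ≤ q₁ ∨ q₁ * q₃ - q₂ ^ 2 ≤ 0) ↔
    ∃ φ, 0 ≤ Real.cos φ ^ 2 * q₁ + 2 * Real.cos φ * Real.sin φ * q₂ + Real.sin φ ^ 2 * q₃ := by
  constructor
  · intro h
    by_cases hq : 0 ≤ q₁
    · exact ⟨0, by simpa using hq⟩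
    · have hf := h.resolve_left hq
      push Not at hq
      refine ⟨Real.arctan (q₂ / q₁) + Real.pi / 2, ?_⟩
      rw [Real.cos_add_pi_div_two, Real.sin_add_pi_div_two]
      have hs : Real.sin (Real.arctan (q₂ / q₁)) =
          q₂ / q₁ * Real.cos (Real.arctan (q₂ / q₁)) := by
        have := Real.tan_mul_cos (Real.cos_arctan_pos (q₂ / q₁)).ne'
        rw [Real.tan_arctan] at this
        exact this.symm
      rw [hs]
      set c := Real.cos (Real.arctan (q₂ / q₁))
      have : (-(q₂ / q₁ * c)) ^ 2 * q₁ + 2 * (-(q₂ / q₁ * c)) * c * q₂ + c ^ 2 * q₃ =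
          c ^ 2 * ((q₁ * q₃ - q₂ ^ 2) / q₁) := by
        have := hq.ne
        field_simp
        ring
      rw [this]
      exact mul_nonneg (sq_nonneg _) (div_nonneg_of_nonpos hf hq.le)
  · rintro ⟨φ, hφ⟩
    by_contra! h
    exact absurd (neg_of_val h.1 h.2) (not_lt.2 hφ)

lemma f_quart (M₁ M₂ M₃ : Matrix (Fin 3) (Fin 3) ℝ)
    (hM₁ : M₁.IsSymm) (hM₂ : M₂.IsSymm) (hM₃ : M₃.IsSymm) (d z : Fin 3 → ℝ) :
    ∃ c0 c1 c2 c3 : ℝ, ∀ u : ℝ,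
      ((d + u • z) ⬝ᵥ (M₁ *ᵥ (d + u • z))) * ((d + u • z) ⬝ᵥ (M₃ *ᵥ (d + u • z)))
        - ((d + u • z) ⬝ᵥ (M₂ *ᵥ (d + u • z))) ^ 2 =
      c0 + c1 * u + c2 * u ^ 2 + c3 * u ^ 3
        + ((z ⬝ᵥ (M₁ *ᵥ z)) * (z ⬝ᵥ (M₃ *ᵥ z)) - (z ⬝ᵥ (M₂ *ᵥ z)) ^ 2) * u ^ 4 := by
  have key : ∀ M : Matrix (Fin 3) (Fin 3) ℝ, M.IsSymm → ∃ a b : ℝ, ∀ u : ℝ,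
      (d + u • z) ⬝ᵥ (M *ᵥ (d + u • z)) = a + b * u + (z ⬝ᵥ (M *ᵥ z)) * u ^ 2 := by
    intro M hM
    refine ⟨d ⬝ᵥ (M *ᵥ d), 2 * (d ⬝ᵥ (M *ᵥ z)), fun u => ?_⟩
    have := quad_comb M hM d z 1 u
    rw [one_smul] at this
    rw [this]
    ring
  obtain ⟨a₁, b₁, h₁⟩ := key M₁ hM₁
  obtain ⟨a₂, b₂, h₂⟩ := key M₂ hM₂
  obtain ⟨a₃, b₃, h₃⟩ := key M₃ hM₃
  set k₁ := z ⬝ᵥ (M₁ *ᵥ z)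
  set k₂ := z ⬝ᵥ (M₂ *ᵥ z)
  set k₃ := z ⬝ᵥ (M₃ *ᵥ z)
  refine ⟨a₁ * a₃ - a₂ ^ 2, a₁ * b₃ + b₁ * a₃ - 2 * a₂ * b₂,
    a₁ * k₃ + b₁ * b₃ + k₁ * a₃ - b₂ ^ 2 - 2 * a₂ * k₂,
    b₁ * k₃ + k₁ * b₃ - 2 * b₂ * k₂, fun u => ?_⟩
  rw [h₁, h₂, h₃]
  ring

end QuarticAux

open Matrix in
/-- If the quartic `Δ = {Q₁Q₃ − Q₂² = 0}` is smooth at its real points and the binary sextic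
`det(t₀²M₁ + 2t₀t₁M₂ + t₁²M₃)` is nonzero and squarefree over `ℂ`, and if the image
`S₂ = {Q₁ ≥ 0} ∪ {f ≤ 0} ⊆ ℝP²` of `Y(ℝ)` is nonempty and disconnected, then `S₂` has the
same number of connected components as the real locus `Z` of `Δ`, and this number is 2 or 3. -/
theorem disconnected_image_components_eq_quartic_components
    (M₁ M₂ M₃ : Matrix (Fin 3) (Fin 3) ℝ)
    (hM₁ : M₁.IsSymm) (hM₂ : M₂.IsSymm) (hM₃ : M₃.IsSymm)
    (Q₁ Q₂ Q₃ : (Fin 3 → ℝ) → ℝ)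
    (hQ₁ : ∀ v, Q₁ v = v ⬝ᵥ (M₁ *ᵥ v)) (hQ₂ : ∀ v, Q₂ v = v ⬝ᵥ (M₂ *ᵥ v))
    (hQ₃ : ∀ v, Q₃ v = v ⬝ᵥ (M₃ *ᵥ v))
    (hsm : ∀ P : Fin 3 → ℝ, P ≠ 0 → Q₁ P * Q₃ P - Q₂ P ^ 2 = 0 →
      fderiv ℝ (fun v => Q₁ v * Q₃ v - Q₂ v ^ 2) P ≠ 0)
    (hp : binarySextic M₁ M₂ M₃ ≠ 0) (hsf : Squarefree (binarySextic M₁ M₂ M₃))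
    (S₂ Z : Set (RP 3))
    (hS₂ : S₂ = {x | ∃ P : {v : Fin 3 → ℝ // v ≠ 0}, Quot.mk (projRel 3) P = x ∧
      (0 ≤ Q₁ (P : Fin 3 → ℝ) ∨
        Q₁ (P : Fin 3 → ℝ) * Q₃ (P : Fin 3 → ℝ) - Q₂ (P : Fin 3 → ℝ) ^ 2 ≤ 0)})
    (hZ : Z = {x | ∃ P : {v : Fin 3 → ℝ // v ≠ 0}, Quot.mk (projRel 3) P = x ∧
      Q₁ (P : Fin 3 → ℝ) * Q₃ (P : Fin 3 → ℝ) - Q₂ (P : Fin 3 → ℝ) ^ 2 = 0})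
    (hne : S₂.Nonempty) (hdisc : ¬ IsConnected S₂) :
    Nonempty (ConnectedComponents ↥S₂ ≃ ConnectedComponents ↥Z) ∧
    (Nonempty (ConnectedComponents ↥S₂ ≃ Fin 2) ∨
      Nonempty (ConnectedComponents ↥S₂ ≃ Fin 3)) := by
  obtain rfl : Q₁ = fun v => v ⬝ᵥ (M₁ *ᵥ v) := funext hQ₁
  obtain rfl : Q₂ = fun v => v ⬝ᵥ (M₂ *ᵥ v) := funext hQ₂
  obtain rfl : Q₃ = fun v => v ⬝ᵥ (M₃ *ᵥ v) := funext hQ₃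
  have hnp : ¬ IsPreconnected S₂ := fun h => hdisc ⟨hne, h⟩
  have hpar : S₂ = {x | ∃ φ, x ∈ QuarticAux.pos (QuarticAux.Mang M₁ M₂ M₃ φ)} := by
    rw [hS₂]
    ext x
    constructor
    · rintro ⟨⟨v, hv⟩, rfl, h⟩
      obtain ⟨φ, hφ⟩ := (QuarticAux.param_iff _ _ _).1 h
      exact ⟨φ, v, hv, rfl, by rw [QuarticAux.quad_Mang]; exact hφ⟩
    · rintro ⟨φ, v, hv, rfl, h⟩
      rw [QuarticAux.quad_Mang] at h
      exact ⟨⟨v, hv⟩, rfl, (QuarticAux.param_iff _ _ _).2 ⟨φ, h⟩⟩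
  have hsy := QuarticAux.Mang_symm hM₁ hM₂ hM₃
  obtain ⟨φ₀, hφ₀⟩ : ∃ φ₀, φ₀ ∉ QuarticAux.T (QuarticAux.Mang M₁ M₂ M₃) := by
    by_contra! hall
    apply hnp
    have h1 := QuarticAux.union_preconnected _ (QuarticAux.Mang_cont M₁ M₂ M₃) hsy 0 Real.pi
      (fun s _ => hall s)
    convert h1 using 1
    rw [hpar]
    ext x
    constructor
    · rintro ⟨φ, hφ⟩
      obtain ⟨s, hs, hse⟩ :=
        (QuarticAux.Mang_periodic M₁ M₂ M₃).exists_mem_Ico₀ Real.pi_pos φ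
      rw [hse] at hφ
      exact ⟨s, ⟨hs.1, hs.2.le⟩, hφ⟩
    · rintro ⟨s, -, hs⟩
      exact ⟨s, hs⟩
  obtain ⟨hfin, hcard⟩ := QuarticAux.card_cc hM₁ hM₂ hM₃ hsf hφ₀ S₂ hpar
  have hhom : ∀ (c : ℝ) (v : Fin 3 → ℝ),
      ((c • v) ⬝ᵥ (M₁ *ᵥ (c • v))) * ((c • v) ⬝ᵥ (M₃ *ᵥ (c • v)))
        - ((c • v) ⬝ᵥ (M₂ *ᵥ (c • v))) ^ 2 =
      c ^ 4 * ((v ⬝ᵥ (M₁ *ᵥ v)) * (v ⬝ᵥ (M₃ *ᵥ v)) - (v ⬝ᵥ (M₂ *ᵥ v)) ^ 2) := by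
    intro c v
    rw [QuarticAux.quad_smul, QuarticAux.quad_smul, QuarticAux.quad_smul]
    ring
  -- as the form at `φ₀` is negative definite, `S₂` is the locus `f ≤ 0`
  have himp : ∀ v : Fin 3 → ℝ, v ≠ 0 → 0 ≤ v ⬝ᵥ (M₁ *ᵥ v) →
      (v ⬝ᵥ (M₁ *ᵥ v)) * (v ⬝ᵥ (M₃ *ᵥ v)) - (v ⬝ᵥ (M₂ *ᵥ v)) ^ 2 ≤ 0 := by
    intro v hv h
    by_contra! hf
    apply hφ₀
    refine ⟨v, hv, ?_⟩
    rw [QuarticAux.quad_Mang]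
    have hpos : 0 < v ⬝ᵥ (M₁ *ᵥ v) := by
      rcases h.lt_or_eq with h1 | h1
      · exact h1
      · rw [← h1] at hf
        nlinarith [sq_nonneg (v ⬝ᵥ (M₂ *ᵥ v))]
    have := QuarticAux.neg_of_val (q₁ := -(v ⬝ᵥ (M₁ *ᵥ v))) (q₂ := -(v ⬝ᵥ (M₂ *ᵥ v)))
      (q₃ := -(v ⬝ᵥ (M₃ *ᵥ v))) (φ := φ₀) (by linarith) (by linarith)
    linarith
  have hSf : ∀ v h, QuarticAux.pt v h ∈ S₂ ↔
      (v ⬝ᵥ (M₁ *ᵥ v)) * (v ⬝ᵥ (M₃ *ᵥ v)) - (v ⬝ᵥ (M₂ *ᵥ v)) ^ 2 ≤ 0 := by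
    intro v hv
    constructor
    · intro h
      rw [hS₂] at h
      obtain ⟨⟨w, hw⟩, he, h1⟩ := h
      have h2 : (w ⬝ᵥ (M₁ *ᵥ w)) * (w ⬝ᵥ (M₃ *ᵥ w)) - (w ⬝ᵥ (M₂ *ᵥ w)) ^ 2 ≤ 0 :=
        h1.elim (himp w hw) id
      obtain ⟨c, hc, rfl⟩ := QuarticAux.smul_of_pt_eq (hv := hw) (hw := hv) he
      rw [hhom]
      exact mul_nonpos_of_nonneg_of_nonpos (by positivity) h2
    · intro h
      rw [hS₂]
      exact ⟨⟨v, hv⟩, rfl, Or.inr h⟩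
  have hZf : ∀ v h, QuarticAux.pt v h ∈ Z ↔
      (v ⬝ᵥ (M₁ *ᵥ v)) * (v ⬝ᵥ (M₃ *ᵥ v)) - (v ⬝ᵥ (M₂ *ᵥ v)) ^ 2 = 0 := by
    intro v hv
    constructor
    · intro h
      rw [hZ] at h
      obtain ⟨⟨w, hw⟩, he, h1⟩ := h
      have h2 : (w ⬝ᵥ (M₁ *ᵥ w)) * (w ⬝ᵥ (M₃ *ᵥ w)) - (w ⬝ᵥ (M₂ *ᵥ w)) ^ 2 = 0 := h1
      obtain ⟨c, hc, rfl⟩ := QuarticAux.smul_of_pt_eq (hv := hw) (hw := hv) he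
      rw [hhom, h2, mul_zero]
    · intro h
      rw [hZ]
      exact ⟨⟨v, hv⟩, rfl, h⟩
  have hcont : ∀ M : Matrix (Fin 3) (Fin 3) ℝ, Continuous fun v : Fin 3 → ℝ => v ⬝ᵥ (M *ᵥ v) :=
    fun M => QuarticAux.continuous_quad continuous_const continuous_id
  refine ⟨QuarticAux.cc_equiv
    (f := fun v => (v ⬝ᵥ (M₁ *ᵥ v)) * (v ⬝ᵥ (M₃ *ᵥ v)) - (v ⬝ᵥ (M₂ *ᵥ v)) ^ 2)
    (((hcont M₁).mul (hcont M₃)).sub ((hcont M₂).pow 2)) hhom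
    (QuarticAux.f_quart M₁ M₂ M₃ hM₁ hM₂ hM₃) hsm hSf hZf hnp, ?_⟩
  have h2 : 2 ≤ Nat.card (ConnectedComponents S₂) := by
    by_contra! hlt
    have hsub : Subsingleton (ConnectedComponents S₂) :=
      Finite.card_le_one_iff_subsingleton.1 (by omega)
    apply hnp
    obtain ⟨p, hp⟩ := hne
    have h3 : connectedComponentIn S₂ p = S₂ := by
      refine (connectedComponentIn_subset S₂ p).antisymm fun y hy => ?_
      exact (QuarticAux.cc_eq_iff S₂ ⟨p, hp⟩ ⟨y, hy⟩).1 (Subsingleton.elim _ _)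
    rw [← h3]
    exact isPreconnected_connectedComponentIn
  have e := Finite.equivFin (ConnectedComponents S₂)
  have h23 : Nat.card (ConnectedComponents S₂) = 2 ∨ Nat.card (ConnectedComponents S₂) = 3 := by
    omega
  rcases h23 with h | h
  · exact Or.inl ⟨e.trans (finCongr h)⟩
  · exact Or.inr ⟨e.trans (finCongr h)⟩
end
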